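/- arXiv:1109.4505 — 5 statements merged into one kernel-verified Lean document; each statement's English description precedes it below -/
import Mathlib

section
/- Let G be a finite group, E a Riesz space with sufficiently many projections, and ρ : G → Aut⁺(E) a positive representation. Then the following are equivalent: (i) ρ is order indecomposable; (ii) ρ is projection band irreducible; (iii) ρ is band irreducible; (iv) ρ is ideal irreducible; (v) ρ is principal band irreducible. Moreover, if these equivalent conditions hold, then E is finite dimensional, and if in addition E is nonzero then the dimension of E divides the order of G. -/
/-- A (Riesz) ideal of an ordered real vector space: a submodule `I` such that
`|x| ≤ |y|` and `y ∈ I` imply `x ∈ I`. -/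
def IsRieszIdeal {E : Type*} [AddCommGroup E] [Lattice E] [Module ℝ E]
    (I : Submodule ℝ E) : Prop :=
  ∀ x y : E, |x| ≤ |y| → y ∈ I → x ∈ I

/-- A band: an ideal closed under suprema of its subsets (when they exist in `E`). -/
def IsBand {E : Type*} [AddCommGroup E] [Lattice E] [Module ℝ E]
    (B : Submodule ℝ E) : Prop :=
  IsRieszIdeal B ∧ ∀ (D : Set E) (x : E), D ⊆ (B : Set E) → IsLUB D x → x ∈ B

/-- The disjoint complement of a set `D`. -/
def disjComplement {E : Type*} [AddCommGroup E] [Lattice E] (D : Set E) : Set E :=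
  {x : E | ∀ y ∈ D, |x| ⊓ |y| = 0}

/-- A projection band: a band `B` with `E = B ⊕ Bᵈ`. -/
def IsProjectionBand {E : Type*} [AddCommGroup E] [Lattice E] [Module ℝ E]
    (B : Submodule ℝ E) : Prop :=
  IsBand B ∧ ∀ x : E, ∃ y ∈ B, ∃ z ∈ disjComplement (B : Set E), x = y + z

/-- An order direct sum decomposition `E = L ⊕ M`: every element decomposes uniquely
as a sum of an element of `L` and an element of `M`, and an element is positive iff
both its components are positive. -/
def IsOrderDecomposition {E : Type*} [AddCommGroup E] [Lattice E] [Module ℝ E]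
    (L M : Submodule ℝ E) : Prop :=
  (∀ x : E, ∃ y ∈ L, ∃ z ∈ M, x = y + z) ∧
  (∀ x : E, x ∈ L → x ∈ M → x = 0) ∧
  (∀ y z : E, y ∈ L → z ∈ M → (0 ≤ y + z ↔ 0 ≤ y ∧ 0 ≤ z))

/-- A homomorphism `ρ : G →* (E ≃ₗ[ℝ] E)` is a positive representation when each
`ρ s` is an order isomorphism (hence a lattice automorphism). -/
def IsPositiveRep {E : Type*} [AddCommGroup E] [Lattice E] [Module ℝ E]
    {G : Type*} [Group G] (ρ : G →* (E ≃ₗ[ℝ] E)) : Prop :=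
  ∀ (s : G) (x y : E), x ≤ y ↔ ρ s x ≤ ρ s y

/-- A submodule is `ρ`-invariant if it is mapped into itself by every `ρ s`. -/
def InvariantSubmodule {E : Type*} [AddCommGroup E] [Lattice E] [Module ℝ E]
    {G : Type*} [Group G] (ρ : G →* (E ≃ₗ[ℝ] E)) (B : Submodule ℝ E) : Prop :=
  ∀ (s : G), ∀ x ∈ B, ρ s x ∈ B

/-- `ρ` is order indecomposable if the only `ρ`-invariant order direct sum
decompositions `E = L ⊕ M` are the trivial ones. -/
def OrderIndecomposable {E : Type*} [AddCommGroup E] [Lattice E] [Module ℝ E]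
    {G : Type*} [Group G] (ρ : G →* (E ≃ₗ[ℝ] E)) : Prop :=
  ∀ L M : Submodule ℝ E, IsOrderDecomposition L M →
    InvariantSubmodule ρ L → InvariantSubmodule ρ M → L = ⊥ ∨ L = ⊤

/-- `ρ` is projection band irreducible if the only `ρ`-invariant projection bands
are `{0}` and `E`. -/
def ProjectionBandIrreducible {E : Type*} [AddCommGroup E] [Lattice E] [Module ℝ E]
    {G : Type*} [Group G] (ρ : G →* (E ≃ₗ[ℝ] E)) : Prop :=
  ∀ B : Submodule ℝ E, IsProjectionBand B → InvariantSubmodule ρ B → B = ⊥ ∨ B = ⊤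


/-- `ρ` is band irreducible if the only `ρ`-invariant bands are `{0}` and `E`. -/
def BandIrreducible {E : Type*} [AddCommGroup E] [Lattice E] [Module ℝ E]
    {G : Type*} [Group G] (ρ : G →* (E ≃ₗ[ℝ] E)) : Prop :=
  ∀ B : Submodule ℝ E, IsBand B → InvariantSubmodule ρ B → B = ⊥ ∨ B = ⊤

/-- `ρ` is ideal irreducible if the only `ρ`-invariant ideals are `{0}` and `E`. -/
def IdealIrreducible {E : Type*} [AddCommGroup E] [Lattice E] [Module ℝ E]
    {G : Type*} [Group G] (ρ : G →* (E ≃ₗ[ℝ] E)) : Prop :=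
  ∀ I : Submodule ℝ E, IsRieszIdeal I → InvariantSubmodule ρ I → I = ⊥ ∨ I = ⊤

/-- A principal band: the band generated by a single element, i.e. the smallest band
containing some element `x`. -/
def IsPrincipalBand {E : Type*} [AddCommGroup E] [Lattice E] [Module ℝ E]
    (B : Submodule ℝ E) : Prop :=
  IsBand B ∧ ∃ x ∈ B, ∀ C : Submodule ℝ E, IsBand C → x ∈ C → B ≤ C

/-- `ρ` is principal band irreducible if the only `ρ`-invariant principal bands are
`{0}` and `E`. -/
def PrincipalBandIrreducible {E : Type*} [AddCommGroup E] [Lattice E] [Module ℝ E]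
    {G : Type*} [Group G] (ρ : G →* (E ≃ₗ[ℝ] E)) : Prop :=
  ∀ B : Submodule ℝ E, IsPrincipalBand B → InvariantSubmodule ρ B → B = ⊥ ∨ B = ⊤

/-- `E` has sufficiently many projections if every nonzero band contains a nonzero
projection band. -/
def SufficientlyManyProjections (E : Type*) [AddCommGroup E] [Lattice E] [Module ℝ E] : Prop :=
  ∀ B : Submodule ℝ E, IsBand B → B ≠ ⊥ →
    ∃ P : Submodule ℝ E, IsProjectionBand P ∧ P ≠ ⊥ ∧ P ≤ B

/-!
Disjoint complements of invariant sets are invariant bands, and finite sums of projection bands are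
projection bands. Hence, if `ρ` is projection band irreducible, then the translates of any nonzero
projection band span `E`, which together with sufficiently many projections gives band
irreducibility. A nonzero vector meeting as few of its own translates as possible is then an atom:
two nonzero disjoint vectors below it would, after translating one so that it meets the other, yield
a smaller vector meeting fewer of its translates.

Sufficiently many projections also force `E` to be Archimedean, because the elements that are
infinitesimal relative to a given one form a band. In an Archimedean space the line through an atom
is a projection band. So `E` is the span of the orbit of an atom, any two members of this orbit are
proportional or disjoint, and the dimension of `E` is the index of the stabilizer of the line.
-/

section LatticeOrderedGroup

variable {E : Type*} [AddCommGroup E] [Lattice E]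

/-- Disjointness of two elements of a lattice ordered group, written `x ⊥ y` in the literature. The
order-theoretic `Disjoint` is not applicable, since it needs a least element. -/
def LatticeDisjoint (x y : E) : Prop := |x| ⊓ |y| = 0

theorem LatticeDisjoint.symm {x y : E} (h : LatticeDisjoint x y) : LatticeDisjoint y x :=
  (inf_comm _ _).trans h

variable [IsOrderedAddMonoid E]

theorem eq_zero_of_abs_le_zero {x : E} (h : |x| ≤ 0) : x = 0 :=
  le_antisymm ((le_abs_self x).trans h) (neg_nonpos.mp ((neg_le_abs x).trans h))

theorem eq_zero_of_isBot {x : E} (h : IsBot x) : x = 0 :=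
  le_antisymm (h 0) (le_add_iff_nonneg_left x |>.mp (h (x + x)))

theorem posPart_le_abs (x : E) : x⁺ ≤ |x| :=
  sup_le (le_abs_self x) (abs_nonneg x)

theorem negPart_le_abs (x : E) : x⁻ ≤ |x| :=
  sup_le (neg_le_abs x) (abs_nonneg x)

theorem inf_add_le_inf_add_inf {a b c : E} (ha : 0 ≤ a) (hb : 0 ≤ b) (hc : 0 ≤ c) :
    a ⊓ (b + c) ≤ a ⊓ b + a ⊓ c := by
  rw [← sub_le_iff_le_add, sub_inf]
  refine sup_le ((sub_nonpos.mpr inf_le_left).trans (le_inf ha hb)) (le_inf ?_ ?_)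
  · exact (sub_le_self _ hc).trans inf_le_left
  · exact sub_le_iff_le_add.mpr inf_le_right

theorem add_le_of_inf_eq_zero {a b c : E} (h : a ⊓ b = 0) (ha : a ≤ c) (hb : b ≤ c) :
    a + b ≤ c := by
  rw [← inf_add_sup, h, zero_add]
  exact sup_le ha hb

namespace LatticeDisjoint

variable {x y z : E}

theorem of_abs_inf_abs_le_zero (h : |x| ⊓ |y| ≤ 0) : LatticeDisjoint x y :=
  h.antisymm (le_inf (abs_nonneg x) (abs_nonneg y))

theorem mono {x' y' : E} (h : LatticeDisjoint x y) (hx : |x'| ≤ |x|) (hy : |y'| ≤ |y|) :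
    LatticeDisjoint x' y' :=
  of_abs_inf_abs_le_zero ((inf_le_inf hx hy).trans_eq h)

theorem eq_zero_of_abs_le (h : LatticeDisjoint x y) (hxy : |x| ≤ |y|) : x = 0 :=
  eq_zero_of_abs_le_zero ((le_inf le_rfl hxy).trans_eq h)

theorem eq_zero (h : LatticeDisjoint x x) : x = 0 :=
  h.eq_zero_of_abs_le le_rfl

theorem zero_left (y : E) : LatticeDisjoint 0 y :=
  of_abs_inf_abs_le_zero (inf_le_left.trans_eq abs_zero)

theorem add_left (hx : LatticeDisjoint x z) (hy : LatticeDisjoint y z) :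
    LatticeDisjoint (x + y) z := by
  refine symm (of_abs_inf_abs_le_zero ?_)
  calc |z| ⊓ |x + y| ≤ |z| ⊓ (|x| + |y|) := inf_le_inf_left _ (abs_add_le x y)
    _ ≤ |z| ⊓ |x| + |z| ⊓ |y| :=
        inf_add_le_inf_add_inf (abs_nonneg z) (abs_nonneg x) (abs_nonneg y)
    _ = 0 := by rw [hx.symm, hy.symm, add_zero]

theorem neg_left (h : LatticeDisjoint x y) : LatticeDisjoint (-x) y :=
  h.mono (abs_neg x).le le_rfl

theorem sub_left (hx : LatticeDisjoint x z) (hy : LatticeDisjoint y z) :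
    LatticeDisjoint (x - y) z :=
  sub_eq_add_neg x y ▸ hx.add_left hy.neg_left

theorem abs_le_abs_add (h : LatticeDisjoint x y) : |x| ≤ |x + y| := by
  have triangle : |x| ≤ |x + y| + |y| := by simpa using abs_add_le (x + y) (-y)
  calc |x| = |x| ⊓ (|x + y| + |y|) := (inf_eq_left.mpr triangle).symm
    _ ≤ |x| ⊓ |x + y| + |x| ⊓ |y| :=
        inf_add_le_inf_add_inf (abs_nonneg x) (abs_nonneg _) (abs_nonneg y)
    _ = |x| ⊓ |x + y| := by rw [h, add_zero]
    _ ≤ |x + y| := inf_le_right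

theorem nonneg_of_add_nonneg (h : LatticeDisjoint x y) (hxy : 0 ≤ x + y) : 0 ≤ x := by
  have negPart_le : x⁻ ≤ |y| :=
    sup_le ((neg_le_iff_add_nonneg'.mpr hxy).trans (le_abs_self y)) (abs_nonneg y)
  exact negPart_nonpos.mp ((le_inf (negPart_le_abs x) negPart_le).trans_eq h)

theorem add_nonneg_iff (h : LatticeDisjoint x y) : 0 ≤ x + y ↔ 0 ≤ x ∧ 0 ≤ y :=
  ⟨fun hxy ↦ ⟨h.nonneg_of_add_nonneg hxy, h.symm.nonneg_of_add_nonneg (add_comm x y ▸ hxy)⟩,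
    fun hxy ↦ add_nonneg hxy.1 hxy.2⟩

end LatticeDisjoint

theorem latticeDisjoint_posPart_negPart (x : E) : LatticeDisjoint x⁺ x⁻ := by
  rw [LatticeDisjoint, abs_of_nonneg (posPart_nonneg x), abs_of_nonneg (negPart_nonneg x)]
  exact posPart_inf_negPart_eq_zero x

theorem latticeDisjoint_posPart_of_isLUB {D : Set E} {x y : E} (hx : IsLUB D x)
    (hD : ∀ d ∈ D, LatticeDisjoint d y) : LatticeDisjoint x⁺ y := by
  set w := x⁺ ⊓ |y|
  have w_nonneg : 0 ≤ w := le_inf (posPart_nonneg x) (abs_nonneg y)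
  have le_sub : x ≤ x⁺ - w := hx.2 fun d hd ↦ by
    have disjoint : d⁺ ⊓ w = 0 := by
      have := (hD d hd).mono (x' := d⁺) (y' := w)
        ((abs_of_nonneg (posPart_nonneg d)).trans_le (posPart_le_abs d))
        ((abs_of_nonneg w_nonneg).trans_le inf_le_right)
      rwa [LatticeDisjoint, abs_of_nonneg (posPart_nonneg d), abs_of_nonneg w_nonneg] at this
    exact (le_posPart d).trans <| le_sub_iff_add_le.mpr <|
      add_le_of_inf_eq_zero disjoint (posPart_mono (hx.1 hd)) inf_le_left
  have posPart_le_sub : x⁺ ≤ x⁺ - w := sup_le le_sub (sub_nonneg.mpr inf_le_left)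
  refine LatticeDisjoint.of_abs_inf_abs_le_zero ?_
  rw [abs_of_nonneg (posPart_nonneg x)]
  simpa only [le_sub_self_iff] using posPart_le_sub

end LatticeOrderedGroup

section Ideals

variable {E : Type*} [AddCommGroup E] [Lattice E] [Module ℝ E]

theorem isBand_sInf {S : Set (Submodule ℝ E)} (hS : ∀ B ∈ S, IsBand B) : IsBand (sInf S) := by
  refine ⟨fun x y hxy hy ↦ ?_, fun D x hD hx ↦ ?_⟩
  · rw [Submodule.mem_sInf] at hy ⊢
    exact fun B hB ↦ (hS B hB).1 x y hxy (hy B hB)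
  · exact Submodule.mem_sInf.mpr fun B hB ↦
      (hS B hB).2 D x (fun d hd ↦ Submodule.mem_sInf.mp (hD hd) B hB) hx

/-- The principal band generated by `x`, as the intersection of all bands containing `x`. -/
def bandGenerated (x : E) : Submodule ℝ E := sInf {B | IsBand B ∧ x ∈ B}

theorem mem_bandGenerated (x : E) : x ∈ bandGenerated x :=
  Submodule.mem_sInf.mpr fun _ hB ↦ hB.2

theorem IsBand.bandGenerated_le {B : Submodule ℝ E} {x : E} (hB : IsBand B) (hx : x ∈ B) :
    bandGenerated x ≤ B :=
  sInf_le ⟨hB, hx⟩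

theorem isPrincipalBand_bandGenerated (x : E) : IsPrincipalBand (bandGenerated x) :=
  ⟨isBand_sInf fun _ hB ↦ hB.1, x, mem_bandGenerated x, fun _ hC hx ↦ hC.bandGenerated_le hx⟩

variable [IsOrderedAddMonoid E]

theorem IsRieszIdeal.abs_mem {I : Submodule ℝ E} {x : E} (hI : IsRieszIdeal I) (hx : x ∈ I) :
    |x| ∈ I :=
  hI |x| x (abs_abs x).le hx

end Ideals

section DisjointComplements

variable {E : Type*} [AddCommGroup E] [Lattice E] [Module ℝ E] [PosSMulMono ℝ E]

theorem abs_smul_le_abs_smul_abs (c : ℝ) (x : E) : |c • x| ≤ |c| • |x| := by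
  have smul_le (c : ℝ) : c • x ≤ |c| • |x| := by
    rcases le_total 0 c with hc | hc
    · rw [abs_of_nonneg hc]
      exact smul_le_smul_of_nonneg_left (le_abs_self x) hc
    · rw [abs_of_nonpos hc, ← neg_smul_neg c x]
      exact smul_le_smul_of_nonneg_left (neg_le_abs x) (neg_nonneg.mpr hc)
  exact abs_le'.mpr ⟨smul_le c, by simpa using smul_le (-c)⟩

variable [IsOrderedAddMonoid E]

theorem LatticeDisjoint.smul_left {x y : E} (h : LatticeDisjoint x y) (c : ℝ) :
    LatticeDisjoint (c • x) y := by
  have nsmul_left (n : ℕ) : LatticeDisjoint (n • |x|) y := by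
    induction n with
    | zero => exact zero_nsmul |x| ▸ zero_left y
    | succ n ih => exact succ_nsmul |x| n ▸ ih.add_left (h.mono (abs_abs x).le le_rfl)
  obtain ⟨n, hn⟩ := exists_nat_ge |c|
  refine (nsmul_left n).mono ?_ le_rfl
  calc |c • x| ≤ |c| • |x| := abs_smul_le_abs_smul_abs c x
    _ ≤ (n : ℝ) • |x| := smul_le_smul_of_nonneg_right hn (abs_nonneg x)
    _ = n • |x| := Nat.cast_smul_eq_nsmul ℝ n (|x|)
    _ ≤ |n • (|x|)| := le_abs_self _

/-- The disjoint complement of a set as a linear subspace. -/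
def disjComplementSubmodule (D : Set E) : Submodule ℝ E where
  carrier := disjComplement D
  add_mem' hx hy z hz := LatticeDisjoint.add_left (hx z hz) (hy z hz)
  zero_mem' z _ := LatticeDisjoint.zero_left z
  smul_mem' c _ hx z hz := LatticeDisjoint.smul_left (hx z hz) c

theorem isBand_disjComplementSubmodule (D : Set E) : IsBand (disjComplementSubmodule D) := by
  refine ⟨fun x y hxy hy z hz ↦ LatticeDisjoint.mono (hy z hz) hxy le_rfl, fun S x hS hx y hy ↦ ?_⟩
  have posPart_disjoint : LatticeDisjoint x⁺ y :=
    latticeDisjoint_posPart_of_isLUB hx fun d hd ↦ hS hd y hy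
  rcases S.eq_empty_or_nonempty with rfl | ⟨d, hd⟩
  · rw [eq_zero_of_isBot (isLUB_empty_iff.mp hx)]
    exact LatticeDisjoint.zero_left y
  · have negPart_disjoint : LatticeDisjoint x⁻ y := by
      refine LatticeDisjoint.mono (hS hd y hy) ?_ le_rfl
      rw [abs_of_nonneg (negPart_nonneg x)]
      exact (negPart_anti (hx.1 hd)).trans (negPart_le_abs d)
    exact posPart_sub_negPart x ▸ posPart_disjoint.sub_left negPart_disjoint

theorem linearIndependent_of_pairwise_latticeDisjoint {ι : Type*} {v : ι → E}
    (hv : ∀ i, v i ≠ 0) (hd : Pairwise fun i j ↦ LatticeDisjoint (v i) (v j)) :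
    LinearIndependent ℝ v := by
  refine linearIndependent_iff_notMem_span.mpr fun i hi ↦ hv i ?_
  have span_le : Submodule.span ℝ (v '' (Set.univ \ {i})) ≤ disjComplementSubmodule {v i} := by
    rw [Submodule.span_le]
    rintro _ ⟨j, hj, rfl⟩ _ rfl
    exact hd hj.2
  exact LatticeDisjoint.eq_zero (span_le hi (v i) rfl)

end DisjointComplements

section ProjectionBands

variable {E : Type*} [AddCommGroup E] [Lattice E] [IsOrderedAddMonoid E] [Module ℝ E]
  [PosSMulMono ℝ E]

theorem eq_disjComplementSubmodule_disjComplement {B : Submodule ℝ E}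
    (hB : ∀ x, ∃ y ∈ B, ∃ z ∈ disjComplement (B : Set E), x = y + z) :
    B = disjComplementSubmodule (disjComplement (B : Set E)) := by
  refine le_antisymm (fun x hx y hy ↦ LatticeDisjoint.symm (hy x hx)) fun x hx ↦ ?_
  obtain ⟨y, hy, z, hz, rfl⟩ := hB x
  have z_disjoint_y : LatticeDisjoint z y := hz y hy
  have z_disjoint_self : LatticeDisjoint z z := by
    simpa using LatticeDisjoint.sub_left (hx z hz) z_disjoint_y.symm
  simpa [z_disjoint_self.eq_zero] using hy

theorem isProjectionBand_of_forall_exists_add {B : Submodule ℝ E}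
    (hB : ∀ x, ∃ y ∈ B, ∃ z ∈ disjComplement (B : Set E), x = y + z) : IsProjectionBand B := by
  refine ⟨?_, hB⟩
  rw [eq_disjComplementSubmodule_disjComplement hB]
  exact isBand_disjComplementSubmodule _

theorem isProjectionBand_bot : IsProjectionBand (⊥ : Submodule ℝ E) := by
  refine isProjectionBand_of_forall_exists_add fun x ↦ ⟨0, zero_mem _, x, ?_, (zero_add x).symm⟩
  rintro _ rfl
  exact (LatticeDisjoint.zero_left x).symm

namespace IsProjectionBand

theorem sup {P Q : Submodule ℝ E} (hP : IsProjectionBand P) (hQ : IsProjectionBand Q) :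
    IsProjectionBand (P ⊔ Q) := by
  refine isProjectionBand_of_forall_exists_add fun x ↦ ?_
  obtain ⟨p, hp, p', hp', rfl⟩ := hP.2 x
  obtain ⟨q, hq, r, hr, rfl⟩ := hQ.2 p'
  refine ⟨p + q, Submodule.add_mem_sup hp hq, r, fun y hy ↦ ?_, (add_assoc p q r).symm⟩
  obtain ⟨a, ha, b, hb, rfl⟩ := Submodule.mem_sup.mp hy
  have abs_r_le : |r| ≤ |q + r| := add_comm q r ▸ LatticeDisjoint.abs_le_abs_add (hr q hq)
  have r_disjoint_a : LatticeDisjoint r a := LatticeDisjoint.mono (hp' a ha) abs_r_le le_rfl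
  have r_disjoint_b : LatticeDisjoint r b := hr b hb
  exact (r_disjoint_a.symm.add_left r_disjoint_b.symm).symm

theorem isOrderDecomposition {B : Submodule ℝ E} (hB : IsProjectionBand B) :
    IsOrderDecomposition B (disjComplementSubmodule (B : Set E)) :=
  ⟨hB.2, fun x hx hx' ↦ LatticeDisjoint.eq_zero (hx' x hx),
    fun y _ hy hz ↦ (LatticeDisjoint.symm (hz y hy)).add_nonneg_iff⟩

end IsProjectionBand

end ProjectionBands

section OrderDecompositions

variable {E : Type*} [AddCommGroup E] [Lattice E] [Module ℝ E] {L M : Submodule ℝ E}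

namespace IsOrderDecomposition

theorem symm (h : IsOrderDecomposition L M) : IsOrderDecomposition M L := by
  refine ⟨fun x ↦ ?_, fun x hM hL ↦ h.2.1 x hL hM, fun y z hy hz ↦ ?_⟩
  · obtain ⟨y, hy, z, hz, rfl⟩ := h.1 x
    exact ⟨z, hz, y, hy, add_comm y z⟩
  · rw [add_comm, h.2.2 z y hz hy, and_comm]

variable [IsOrderedAddMonoid E]

theorem mem_left_of_nonneg_of_le (h : IsOrderDecomposition L M) {a b : E} (ha : 0 ≤ a)
    (hab : a ≤ b) (hb : b ∈ L) : a ∈ L := by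
  obtain ⟨l, hl, m, hm, rfl⟩ := h.1 a
  have m_nonneg : 0 ≤ m := ((h.2.2 l m hl hm).mp ha).2
  have sub_add_nonneg : 0 ≤ (b - l) + -m := by
    simpa only [← sub_eq_add_neg, sub_sub] using sub_nonneg.mpr hab
  have neg_m_nonneg : 0 ≤ -m := ((h.2.2 _ _ (sub_mem hb hl) (neg_mem hm)).mp sub_add_nonneg).2
  have m_eq_zero : m = 0 := le_antisymm (neg_nonneg.mp neg_m_nonneg) m_nonneg
  simpa [m_eq_zero] using hl

theorem abs_mem_left (h : IsOrderDecomposition L M) {y : E} (hy : y ∈ L) : |y| ∈ L := by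
  obtain ⟨l, hl, m, hm, abs_eq⟩ := h.1 |y|
  have le_left {a : E} (ha : a ∈ L) (hay : a ≤ |y|) : a ≤ l := by
    have sub_add_nonneg : 0 ≤ (l - a) + m := by
      simpa only [abs_eq, add_sub_right_comm] using sub_nonneg.mpr hay
    exact sub_nonneg.mp ((h.2.2 _ _ (sub_mem hl ha) hm).mp sub_add_nonneg).1
  have abs_le : |y| ≤ l :=
    abs_le'.mpr ⟨le_left hy (le_abs_self y), le_left (neg_mem hy) (neg_le_abs y)⟩
  exact h.mem_left_of_nonneg_of_le (abs_nonneg y) abs_le hl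

theorem latticeDisjoint (h : IsOrderDecomposition L M) {y z : E} (hy : y ∈ L) (hz : z ∈ M) :
    LatticeDisjoint y z := by
  have inf_nonneg : 0 ≤ |y| ⊓ |z| := le_inf (abs_nonneg y) (abs_nonneg z)
  exact h.2.1 _ (h.mem_left_of_nonneg_of_le inf_nonneg inf_le_left (h.abs_mem_left hy))
    (h.symm.mem_left_of_nonneg_of_le inf_nonneg inf_le_right (h.symm.abs_mem_left hz))

theorem isProjectionBand_left [PosSMulMono ℝ E] (h : IsOrderDecomposition L M) :
    IsProjectionBand L := by
  refine isProjectionBand_of_forall_exists_add fun x ↦ ?_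
  obtain ⟨y, hy, z, hz, rfl⟩ := h.1 x
  exact ⟨y, hy, z, fun w hw ↦ (h.latticeDisjoint hw hz).symm, rfl⟩

end IsOrderDecomposition

end OrderDecompositions

section RieszIsomorphisms

variable {E F : Type*} [AddCommGroup E] [Lattice E] [Module ℝ E]
  [AddCommGroup F] [Lattice F] [Module ℝ F]

/-- A linear equivalence is a Riesz isomorphism if it preserves and reflects the order; a positive
representation acts by such maps. -/
def IsRieszIso (f : E ≃ₗ[ℝ] F) : Prop := ∀ x y, x ≤ y ↔ f x ≤ f y

theorem IsPositiveRep.isRieszIso {G : Type*} [Group G] {ρ : G →* (E ≃ₗ[ℝ] E)}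
    (hρ : IsPositiveRep ρ) (s : G) : IsRieszIso (ρ s) :=
  hρ s

namespace IsRieszIso

variable {f : E ≃ₗ[ℝ] F}

/-- The order isomorphism underlying a Riesz isomorphism, giving access to the library of
`OrderIso`. -/
def orderIso (hf : IsRieszIso f) : E ≃o F where
  toEquiv := f.toEquiv
  map_rel_iff' := (hf _ _).symm

theorem symm (hf : IsRieszIso f) : IsRieszIso f.symm := fun x y ↦ by
  rw [hf, f.apply_symm_apply, f.apply_symm_apply]

theorem map_abs (hf : IsRieszIso f) (x : E) : f |x| = |f x| :=
  (hf.orderIso.map_sup x (-x)).trans (congrArg (f x ⊔ ·) (map_neg f x))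

theorem abs_le_abs_iff (hf : IsRieszIso f) {x y : E} : |f x| ≤ |f y| ↔ |x| ≤ |y| := by
  rw [← hf.map_abs, ← hf.map_abs, ← hf]

theorem map_nonneg_iff (hf : IsRieszIso f) {x : E} : 0 ≤ f x ↔ 0 ≤ x := by
  rw [hf 0 x, map_zero]

theorem latticeDisjoint_iff (hf : IsRieszIso f) {x y : E} :
    LatticeDisjoint (f x) (f y) ↔ LatticeDisjoint x y := by
  have map_inf : f (|x| ⊓ |y|) = |f x| ⊓ |f y| := by
    rw [← hf.map_abs, ← hf.map_abs]
    exact hf.orderIso.map_inf _ _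
  rw [LatticeDisjoint, ← map_inf, map_eq_zero_iff f f.injective, LatticeDisjoint]

end IsRieszIso

theorem IsBand.comap {f : E ≃ₗ[ℝ] F} {B : Submodule ℝ F} (hB : IsBand B) (hf : IsRieszIso f) :
    IsBand (B.comap f.toLinearMap) := by
  refine ⟨fun x y hxy hy ↦ hB.1 (f x) (f y) (hf.abs_le_abs_iff.mpr hxy) hy,
    fun D x hD hx ↦ hB.2 (f '' D) (f x) ?_ ?_⟩
  · exact Set.image_subset_iff.mpr hD
  · exact hf.orderIso.isLUB_image'.mpr hx

theorem IsProjectionBand.map [IsOrderedAddMonoid F] [PosSMulMono ℝ F] {f : E ≃ₗ[ℝ] F}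
    {P : Submodule ℝ E} (hP : IsProjectionBand P) (hf : IsRieszIso f) :
    IsProjectionBand (P.map f.toLinearMap) := by
  refine isProjectionBand_of_forall_exists_add fun x ↦ ?_
  obtain ⟨y, hy, z, hz, hx⟩ := hP.2 (f.symm x)
  refine ⟨f y, Submodule.mem_map_of_mem hy, f z, ?_, ?_⟩
  · rintro _ ⟨w, hw, rfl⟩
    exact hf.latticeDisjoint_iff.mpr (hz w hw)
  · rw [← map_add, ← hx, f.apply_symm_apply]

end RieszIsomorphisms

section InvariantBands

variable {G E : Type*} [Group G] [AddCommGroup E] [Module ℝ E]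
  {ρ : G →* (E ≃ₗ[ℝ] E)}

/-- The smallest `ρ`-invariant subspace containing `P`, that is, the sum of the translates of `P`.
-/
def invariantHull (ρ : G →* (E ≃ₗ[ℝ] E)) (P : Submodule ℝ E) : Submodule ℝ E :=
  ⨆ s, P.map (ρ s).toLinearMap

theorem le_invariantHull (P : Submodule ℝ E) : P ≤ invariantHull ρ P :=
  fun x hx ↦ Submodule.mem_iSup_of_mem 1 ⟨x, hx, by simp⟩

variable [Lattice E]

theorem BandIrreducible.projectionBandIrreducible (h : BandIrreducible ρ) :
    ProjectionBandIrreducible ρ :=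
  fun B hB ↦ h B hB.1

theorem invariantHull_le {P K : Submodule ℝ E} (hPK : P ≤ K) (hK : InvariantSubmodule ρ K) :
    invariantHull ρ P ≤ K :=
  iSup_le fun s ↦ Submodule.map_le_iff_le_comap.mpr fun x hx ↦ hK s x (hPK hx)

theorem invariantSubmodule_invariantHull (P : Submodule ℝ E) :
    InvariantSubmodule ρ (invariantHull ρ P) := by
  intro s
  change invariantHull ρ P ≤ (invariantHull ρ P).comap (ρ s).toLinearMap
  refine iSup_le fun t ↦ ?_
  rintro _ ⟨x, hx, rfl⟩
  exact Submodule.mem_iSup_of_mem (s * t) ⟨x, hx, by simp⟩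

variable [IsOrderedAddMonoid E]

theorem PrincipalBandIrreducible.bandIrreducible [Finite G] (h : PrincipalBandIrreducible ρ)
    (hρ : IsPositiveRep ρ) : BandIrreducible ρ := by
  intro B hB B_invariant
  refine or_iff_not_imp_left.mpr fun hB0 ↦ ?_
  obtain ⟨x, hx, hx0⟩ := B.ne_bot_iff.mp hB0
  have := Fintype.ofFinite G
  set y := ∑ s, ρ s |x|
  have y_mem : y ∈ B := sum_mem fun s _ ↦ B_invariant s _ (hB.1.abs_mem hx)
  have y_ne_zero : y ≠ 0 := by
    have abs_le : |x| ≤ y := by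
      have := Finset.single_le_sum (f := fun s ↦ ρ s |x|)
        (fun s _ ↦ (hρ.isRieszIso s).map_nonneg_iff.mpr (abs_nonneg x)) (Finset.mem_univ 1)
      simpa using this
    exact fun hy ↦ hx0 (eq_zero_of_abs_le_zero (hy ▸ abs_le))
  have y_fixed (s : G) : ρ s y = y := by
    rw [map_sum]
    exact Fintype.sum_equiv (Equiv.mulLeft s) _ _ fun t ↦ by simp
  have y_invariant : InvariantSubmodule ρ (bandGenerated y) := fun s ↦ by
    have band : IsBand ((bandGenerated y).comap (ρ s).toLinearMap) :=
      (isPrincipalBand_bandGenerated y).1.comap (hρ.isRieszIso s)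
    exact band.bandGenerated_le (by simp [y_fixed, mem_bandGenerated])
  rcases h _ (isPrincipalBand_bandGenerated y) y_invariant with hbot | htop
  · exact absurd ((Submodule.mem_bot ℝ).mp (hbot ▸ mem_bandGenerated y)) y_ne_zero
  · exact top_le_iff.mp (htop.ge.trans (hB.bandGenerated_le y_mem))

variable [PosSMulMono ℝ E]

theorem IsPositiveRep.invariantSubmodule_disjComplementSubmodule (hρ : IsPositiveRep ρ)
    {D : Set E} (hD : ∀ s, ∀ x ∈ D, ρ s x ∈ D) :
    InvariantSubmodule ρ (disjComplementSubmodule D) := by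
  intro s x hx y hy
  have disjoint : LatticeDisjoint x (ρ s⁻¹ y) := hx _ (hD s⁻¹ y hy)
  have disjoint_image := (hρ.isRieszIso s).latticeDisjoint_iff.mpr disjoint
  rwa [← LinearEquiv.mul_apply, ← map_mul, mul_inv_cancel, map_one] at disjoint_image

theorem IsPositiveRep.exists_not_latticeDisjoint (hρ : IsPositiveRep ρ)
    (h : BandIrreducible ρ) {x y : E} (hx : x ≠ 0) (hy : y ≠ 0) :
    ∃ s, ¬ LatticeDisjoint (ρ s x) y := by
  by_contra! hdisjoint
  set B := disjComplementSubmodule (Set.range fun s ↦ ρ s x)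
  have y_mem : y ∈ B := by
    rintro _ ⟨s, rfl⟩
    exact (hdisjoint s).symm
  have B_invariant : InvariantSubmodule ρ B := by
    refine hρ.invariantSubmodule_disjComplementSubmodule ?_
    rintro s _ ⟨t, rfl⟩
    exact ⟨s * t, by simp⟩
  rcases h B (isBand_disjComplementSubmodule _) B_invariant with hB | hB
  · exact hy (by simpa [hB] using y_mem)
  · have x_mem : x ∈ B := hB ▸ Submodule.mem_top
    exact hx (LatticeDisjoint.eq_zero (x_mem x ⟨1, by simp⟩))

theorem IsProjectionBand.invariantHull [Finite G] (hρ : IsPositiveRep ρ) {P : Submodule ℝ E}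
    (hP : IsProjectionBand P) : IsProjectionBand (invariantHull ρ P) := by
  have := Fintype.ofFinite G
  rw [_root_.invariantHull, ← Finset.sup_univ_eq_iSup]
  exact Finset.sup_induction isProjectionBand_bot (fun _ hA _ hB ↦ hA.sup hB)
    fun s _ ↦ hP.map (hρ.isRieszIso s)

theorem ProjectionBandIrreducible.eq_top_of_le [Finite G] (h : ProjectionBandIrreducible ρ)
    (hρ : IsPositiveRep ρ) {P K : Submodule ℝ E} (hP : IsProjectionBand P) (hP0 : P ≠ ⊥)
    (hPK : P ≤ K) (hK : InvariantSubmodule ρ K) : K = ⊤ := by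
  rcases h _ (hP.invariantHull hρ) (invariantSubmodule_invariantHull P) with hbot | htop
  · exact absurd (le_bot_iff.mp ((le_invariantHull P).trans_eq hbot)) hP0
  · exact top_le_iff.mp (htop.ge.trans (invariantHull_le hPK hK))

theorem ProjectionBandIrreducible.bandIrreducible [Finite G] (h : ProjectionBandIrreducible ρ)
    (hρ : IsPositiveRep ρ) (hE : SufficientlyManyProjections E) : BandIrreducible ρ := by
  intro B hB B_invariant
  refine or_iff_not_imp_left.mpr fun hB0 ↦ ?_
  obtain ⟨P, hP, hP0, hPB⟩ := hE B hB hB0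
  exact h.eq_top_of_le hρ hP hP0 hPB B_invariant

theorem orderIndecomposable_iff_projectionBandIrreducible (hρ : IsPositiveRep ρ) :
    OrderIndecomposable ρ ↔ ProjectionBandIrreducible ρ :=
  ⟨fun h B hB B_invariant ↦ h B _ hB.isOrderDecomposition B_invariant
      (hρ.invariantSubmodule_disjComplementSubmodule B_invariant),
    fun h L _ hLM L_invariant _ ↦ h L hLM.isProjectionBand_left L_invariant⟩

end InvariantBands

section Archimedean

variable {E : Type*} [AddCommGroup E] [Lattice E] [Module ℝ E]

variable (E) in
/-- The Archimedean property of a Riesz space, in the form that no nonzero element is infinitesimal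
with respect to another one. -/
def RieszArchimedean : Prop := ∀ u v : E, (∀ t : ℝ, 0 < t → |u| ≤ t • |v|) → u = 0

variable [IsOrderedAddMonoid E] [PosSMulMono ℝ E]

/-- The elements that are infinitesimal with respect to `v`; the Archimedean property says that
there are none besides zero. -/
def infinitesimals (v : E) : Submodule ℝ E where
  carrier := {w | ∀ t : ℝ, 0 < t → |w| ≤ t • |v|}
  add_mem' {a b} ha hb t ht := by
    calc |a + b| ≤ |a| + |b| := abs_add_le a b
      _ ≤ (t / 2) • |v| + (t / 2) • |v| := add_le_add (ha _ (half_pos ht)) (hb _ (half_pos ht))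
      _ = t • |v| := by rw [← add_smul, add_halves]
  zero_mem' t ht := abs_zero.trans_le (smul_nonneg ht.le (abs_nonneg v))
  smul_mem' c a ha t ht := by
    have scale_pos : 0 < |c| + 1 := by positivity
    calc |c • a| ≤ |c| • |a| := abs_smul_le_abs_smul_abs c a
      _ ≤ (|c| + 1) • |a| := smul_le_smul_of_nonneg_right (by linarith) (abs_nonneg a)
      _ ≤ (|c| + 1) • (t / (|c| + 1)) • |v| :=
          smul_le_smul_of_nonneg_left (ha _ (div_pos ht scale_pos)) scale_pos.le
      _ = t • |v| := by rw [smul_smul, mul_div_cancel₀ t scale_pos.ne']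

theorem isBand_infinitesimals (v : E) : IsBand (infinitesimals v) := by
  refine ⟨fun x y hxy hy t ht ↦ hxy.trans (hy t ht), fun D x hD hx ↦ ?_⟩
  rcases D.eq_empty_or_nonempty with rfl | ⟨d, hd⟩
  · rw [eq_zero_of_isBot (isLUB_empty_iff.mp hx)]
    exact zero_mem _
  · refine fun t ht ↦ abs_le'.mpr ⟨hx.2 fun e he ↦ (le_abs_self e).trans (hD he t ht), ?_⟩
    exact (neg_le_neg (hx.1 hd)).trans ((neg_le_abs d).trans (hD hd t ht))

theorem SufficientlyManyProjections.rieszArchimedean (hE : SufficientlyManyProjections E) :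
    RieszArchimedean E := by
  intro u v hu
  by_contra u_ne_zero
  obtain ⟨P, hP, hP0, hPv⟩ := hE (infinitesimals v) (isBand_infinitesimals v)
    (Submodule.ne_bot_iff _ |>.mpr ⟨u, hu, u_ne_zero⟩)
  obtain ⟨y, hy, z, hz, hv⟩ := hP.2 v
  have y_disjoint_z : LatticeDisjoint y z := LatticeDisjoint.symm (hz y hy)
  have y_le_z : |y| ≤ |z| := by
    have two_smul_le : (2 : ℝ) • |y| ≤ |y| + |z| := by
      calc (2 : ℝ) • |y| ≤ (2 : ℝ) • (2 : ℝ)⁻¹ • |v| :=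
            smul_le_smul_of_nonneg_left (hPv hy _ (by norm_num)) zero_le_two
        _ = |v| := smul_inv_smul₀ two_ne_zero _
        _ ≤ |y| + |z| := hv ▸ abs_add_le y z
    rwa [two_smul, add_le_add_iff_left] at two_smul_le
  obtain ⟨p, hp, p_ne_zero⟩ := P.ne_bot_iff.mp hP0
  have v_disjoint_p : LatticeDisjoint v p := by
    rw [hv, y_disjoint_z.eq_zero_of_abs_le y_le_z, zero_add]
    exact hz p hp
  have p_le_v : |p| ≤ |v| := by simpa using hPv hp 1 one_pos
  exact p_ne_zero (v_disjoint_p.symm.eq_zero_of_abs_le p_le_v)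

namespace RieszArchimedean

variable (hE : RieszArchimedean E)
include hE

theorem nonpos_of_forall_le_smul {u v : E} (hv : 0 ≤ v) (h : ∀ t : ℝ, 0 < t → u ≤ t • v) :
    u ≤ 0 := by
  refine posPart_nonpos.mp (hE u⁺ v fun t ht ↦ ?_).le
  rw [abs_of_nonneg (posPart_nonneg u), abs_of_nonneg hv]
  exact sup_le (h t ht) (smul_nonneg ht.le hv)

theorem bddAbove_setOf_smul_le {x y : E} (hx : 0 < x) (hy : 0 ≤ y) :
    BddAbove {t : ℝ | t • x ≤ y} := by
  by_contra unbounded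
  refine hx.not_ge (hE.nonpos_of_forall_le_smul hy fun t ht ↦ ?_)
  obtain ⟨s, hs, t_inv_lt⟩ := not_bddAbove_iff.mp unbounded t⁻¹
  refine (le_inv_smul_iff_of_pos (inv_pos.mpr ht) |>.mpr ?_).trans_eq (by rw [inv_inv])
  exact (smul_le_smul_of_nonneg_right t_inv_lt.le hx.le).trans hs

theorem exists_isGreatest_setOf_smul_le {x y : E} (hx : 0 < x) (hy : 0 ≤ y) :
    ∃ c, IsGreatest {t : ℝ | t • x ≤ y} c := by
  set S := {t : ℝ | t • x ≤ y}
  have S_nonempty : S.Nonempty := ⟨0, by simpa [S] using hy⟩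
  have S_bddAbove : BddAbove S := hE.bddAbove_setOf_smul_le hx hy
  refine ⟨sSup S, sub_nonpos.mp ?_, fun t ht ↦ le_csSup S_bddAbove ht⟩
  refine hE.nonpos_of_forall_le_smul hx.le fun ε hε ↦ ?_
  obtain ⟨t, ht, sub_lt⟩ := exists_lt_of_lt_csSup S_nonempty (sub_lt_self (sSup S) hε)
  calc sSup S • x - y ≤ sSup S • x - t • x := sub_le_sub_left ht _
    _ = (sSup S - t) • x := (sub_smul _ _ _).symm
    _ ≤ ε • x := smul_le_smul_of_nonneg_right (by linarith) hx.le

end RieszArchimedean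

end Archimedean

section Atoms

variable {E : Type*} [AddCommGroup E] [Lattice E]

/-- An atom of a Riesz space, expressed by the absence of two nonzero disjoint elements below it. In
Archimedean spaces this is equivalent to the other usual definition, that every element between `0`
and `x` is a multiple of `x`. -/
structure IsRieszAtom (x : E) : Prop where
  pos : 0 < x
  eq_zero_or_eq_zero : ∀ u v, |u| ≤ x → |v| ≤ x → LatticeDisjoint u v → u = 0 ∨ v = 0

namespace IsRieszAtom

theorem map {F : Type*} [AddCommGroup F] [Lattice F] [Module ℝ E] [Module ℝ F] {f : E ≃ₗ[ℝ] F}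
    (hf : IsRieszIso f) {x : E} (hx : IsRieszAtom x) : IsRieszAtom (f x) where
  pos := (hf.map_nonneg_iff.mpr hx.pos.le).lt_of_ne' (f.map_ne_zero_iff.mpr hx.pos.ne')
  eq_zero_or_eq_zero u v hu hv huv := by
    have abs_symm_le {w : F} (hw : |w| ≤ f x) : |f.symm w| ≤ x := by
      rwa [← hf.symm.map_abs, hf, f.apply_symm_apply]
    simpa using hx.eq_zero_or_eq_zero (f.symm u) (f.symm v) (abs_symm_le hu) (abs_symm_le hv)
      (hf.symm.latticeDisjoint_iff.mpr huv)

variable [IsOrderedAddMonoid E] {x y : E}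

theorem nonneg_or_nonpos (hx : IsRieszAtom x) {a : E} (ha : |a| ≤ x) : 0 ≤ a ∨ a ≤ 0 := by
  have posPart_le : |a⁺| ≤ x :=
    (abs_of_nonneg (posPart_nonneg a)).trans_le ((posPart_le_abs a).trans ha)
  have negPart_le : |a⁻| ≤ x :=
    (abs_of_nonneg (negPart_nonneg a)).trans_le ((negPart_le_abs a).trans ha)
  rcases hx.eq_zero_or_eq_zero _ _ posPart_le negPart_le (latticeDisjoint_posPart_negPart a)
    with posPart_eq | negPart_eq
  · exact .inr (posPart_eq_zero.mp posPart_eq)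
  · exact .inl (negPart_eq_zero.mp negPart_eq)

variable [Module ℝ E] [PosSMulMono ℝ E]

theorem latticeDisjoint_of_forall_not_smul_le (hx : IsRieszAtom x) (hE : RieszArchimedean E)
    {z : E} (hz : 0 ≤ z) (h : ∀ ε : ℝ, 0 < ε → ¬ ε • x ≤ z) : LatticeDisjoint z x := by
  have inf_nonneg : 0 ≤ z ⊓ x := le_inf hz hx.pos.le
  refine LatticeDisjoint.of_abs_inf_abs_le_zero ?_
  rw [abs_of_nonneg hz, abs_of_nonneg hx.pos.le]
  refine hE.nonpos_of_forall_le_smul hx.pos.le fun t ht ↦ ?_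
  set ε := min t 1
  have ε_pos : 0 < ε := lt_min ht one_pos
  have smul_le : ε • x ≤ x := smul_le_of_le_one_left hx.pos.le (min_le_right t 1)
  have abs_sub_le : |z ⊓ x - ε • x| ≤ x := abs_le'.mpr
    ⟨(sub_le_self _ (smul_nonneg ε_pos.le hx.pos.le)).trans inf_le_right,
      (neg_sub _ _).trans_le ((sub_le_self _ inf_nonneg).trans smul_le)⟩
  rcases hx.nonneg_or_nonpos abs_sub_le with hsub | hsub
  · exact absurd ((sub_nonneg.mp hsub).trans inf_le_left) (h ε ε_pos)
  · exact (sub_nonpos.mp hsub).trans (smul_le_smul_of_nonneg_right (min_le_left t 1) hx.pos.le)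

theorem exists_latticeDisjoint_sub_smul (hx : IsRieszAtom x) (hE : RieszArchimedean E) (y : E) :
    ∃ c : ℝ, LatticeDisjoint (y - c • x) x := by
  have of_nonneg {y : E} (hy : 0 ≤ y) : ∃ c : ℝ, LatticeDisjoint (y - c • x) x := by
    obtain ⟨c, hc, c_greatest⟩ := hE.exists_isGreatest_setOf_smul_le hx.pos hy
    refine ⟨c, hx.latticeDisjoint_of_forall_not_smul_le hE (sub_nonneg.mpr hc) fun ε hε hle ↦ ?_⟩
    have add_smul_le : (ε + c) • x ≤ y := by rwa [add_smul, ← le_sub_iff_add_le]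
    linarith [c_greatest add_smul_le]
  obtain ⟨c, hc⟩ := of_nonneg (posPart_nonneg y)
  obtain ⟨d, hd⟩ := of_nonneg (negPart_nonneg y)
  refine ⟨c - d, ?_⟩
  convert hc.sub_left hd using 1
  rw [sub_smul, sub_sub_sub_comm, posPart_sub_negPart]

theorem isProjectionBand_span_singleton (hx : IsRieszAtom x) (hE : RieszArchimedean E) :
    IsProjectionBand (ℝ ∙ x) := by
  refine isProjectionBand_of_forall_exists_add fun y ↦ ?_
  obtain ⟨c, hc⟩ := hx.exists_latticeDisjoint_sub_smul hE y
  refine ⟨c • x, Submodule.smul_mem _ c (Submodule.mem_span_singleton_self x), y - c • x, ?_,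
    (add_sub_cancel _ _).symm⟩
  intro w hw
  obtain ⟨d, rfl⟩ := Submodule.mem_span_singleton.mp hw
  exact (hc.symm.smul_left d).symm

theorem latticeDisjoint_or_exists_eq_smul (hx : IsRieszAtom x) (hy : IsRieszAtom y)
    (hE : RieszArchimedean E) : LatticeDisjoint y x ∨ ∃ c : ℝ, y = c • x := by
  obtain ⟨c, hc⟩ := hx.exists_latticeDisjoint_sub_smul hE y
  have disjoint : LatticeDisjoint (c • x) (y - c • x) := hc.symm.smul_left c
  have abs_smul_le : |c • x| ≤ y := by
    simpa [abs_of_nonneg hy.pos.le] using disjoint.abs_le_abs_add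
  have abs_sub_le : |y - c • x| ≤ y := by
    simpa [abs_of_nonneg hy.pos.le] using disjoint.symm.abs_le_abs_add
  rcases hy.eq_zero_or_eq_zero _ _ abs_smul_le abs_sub_le disjoint with smul_eq | sub_eq
  · exact .inl (by simpa [smul_eq] using hc)
  · exact .inr ⟨c, sub_eq_zero.mp sub_eq⟩

end IsRieszAtom

end Atoms

section AtomsOfRepresentations

variable {G E : Type*} [Group G] [AddCommGroup E] [Lattice E] [Module ℝ E]
  {ρ : G →* (E ≃ₗ[ℝ] E)}

/-- The group elements that do not move `x` to an element disjoint from it; an atom is found by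
minimizing this set. -/
def overlap (ρ : G →* (E ≃ₗ[ℝ] E)) (x : E) : Set G := {s | ¬ LatticeDisjoint (ρ s x) x}

variable [IsOrderedAddMonoid E] (hρ : IsPositiveRep ρ)
include hρ

theorem IsPositiveRep.overlap_mono {x z : E} (hzx : |z| ≤ |x|) : overlap ρ z ⊆ overlap ρ x :=
  fun s hs hdisjoint ↦ hs (hdisjoint.mono ((hρ.isRieszIso s).abs_le_abs_iff.mpr hzx) hzx)

variable [PosSMulMono ℝ E]

theorem IsPositiveRep.exists_overlap_ssubset (h : BandIrreducible ρ) {x u v : E} (hu : |u| ≤ |x|)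
    (hv : |v| ≤ |x|) (huv : LatticeDisjoint u v) (hu0 : u ≠ 0) (hv0 : v ≠ 0) :
    ∃ z ≠ 0, overlap ρ z ⊂ overlap ρ x := by
  obtain ⟨s, hs⟩ := hρ.exists_not_latticeDisjoint h hu0 hv0
  set z := |ρ s u| ⊓ |v|
  have abs_z : |z| = z := abs_of_nonneg (le_inf (abs_nonneg _) (abs_nonneg v))
  have z_le_v : |z| ≤ |v| := abs_z.trans_le inf_le_right
  have inv_z_le_u : |ρ s⁻¹ z| ≤ |u| := by
    have := (hρ.isRieszIso s⁻¹).abs_le_abs_iff.mpr (abs_z.trans_le inf_le_left)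
    simpa using this
  have inv_mem_overlap : s⁻¹ ∈ overlap ρ x := fun hdisjoint ↦ by
    have inv_z_disjoint_self : LatticeDisjoint (ρ s⁻¹ z) (ρ s⁻¹ z) := hdisjoint.mono
      ((hρ.isRieszIso s⁻¹).abs_le_abs_iff.mpr (z_le_v.trans hv)) (inv_z_le_u.trans hu)
    exact hs ((hρ.isRieszIso s⁻¹).latticeDisjoint_iff.mp inv_z_disjoint_self).eq_zero
  have inv_notMem_overlap : s⁻¹ ∉ overlap ρ z := not_not.mpr (huv.mono inv_z_le_u z_le_v)
  exact ⟨z, hs, (hρ.overlap_mono (z_le_v.trans hv)).ssubset_of_mem_notMem inv_mem_overlap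
    inv_notMem_overlap⟩

theorem IsPositiveRep.exists_isRieszAtom [Finite G] [Nontrivial E] (h : BandIrreducible ρ) :
    ∃ x : E, IsRieszAtom x := by
  obtain ⟨x, hx0, minimal⟩ := exists_minimalFor_of_wellFoundedLT (· ≠ 0) (overlap ρ)
    (exists_ne (0 : E))
  refine ⟨|x|, (abs_nonneg x).lt_of_ne' (mt (fun hx ↦ eq_zero_of_abs_le_zero hx.le) hx0),
    fun u v hu hv huv ↦ ?_⟩
  by_contra! hne
  obtain ⟨z, hz0, hz⟩ := hρ.exists_overlap_ssubset h hu hv huv hne.1 hne.2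
  exact hz.not_subset (minimal hz0 hz.subset)

theorem BandIrreducible.idealIrreducible [Finite G] (h : BandIrreducible ρ)
    (hE : RieszArchimedean E) : IdealIrreducible ρ := by
  intro I hI I_invariant
  refine or_iff_not_imp_left.mpr fun hI0 ↦ ?_
  obtain ⟨y, hy, hy0⟩ := I.ne_bot_iff.mp hI0
  have : Nontrivial E := ⟨y, 0, hy0⟩
  obtain ⟨x, hx⟩ := hρ.exists_isRieszAtom h
  obtain ⟨s, hs⟩ := hρ.exists_not_latticeDisjoint h hx.pos.ne' hy0
  have hsx : IsRieszAtom (ρ s x) := hx.map (hρ.isRieszIso s)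
  obtain ⟨c, hc⟩ := hsx.exists_latticeDisjoint_sub_smul hE y
  have smul_mem : c • ρ s x ∈ I := by
    refine hI _ y ?_ hy
    simpa using LatticeDisjoint.abs_le_abs_add (hc.symm.smul_left c)
  have c_ne_zero : c ≠ 0 := by
    rintro rfl
    exact hs (by simpa using hc.symm)
  have span_le : ℝ ∙ ρ s x ≤ I :=
    (Submodule.span_singleton_le_iff_mem _ _).mpr ((I.smul_mem_iff c_ne_zero).mp smul_mem)
  exact h.projectionBandIrreducible.eq_top_of_le hρ (hsx.isProjectionBand_span_singleton hE)
    (mt Submodule.span_singleton_eq_bot.mp hsx.pos.ne') span_le I_invariant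

end AtomsOfRepresentations

section OrbitsOfLines

open scoped Pointwise

variable {K V G : Type*} [Field K] [AddCommGroup V] [Module K V] [Group G] (ρ : G →* (V ≃ₗ[K] V))
  (x : V)

/-- The stabilizer of the line through `x`. -/
def lineStabilizer : Subgroup G := (MulAction.stabilizer (V ≃ₗ[K] V) (K ∙ x)).comap ρ

variable {ρ x} in
theorem mem_lineStabilizer_iff {s : G} : s ∈ lineStabilizer ρ x ↔ K ∙ ρ s x = K ∙ x := by
  rw [lineStabilizer, Subgroup.mem_comap, MulAction.mem_stabilizer_iff, Submodule.smul_span,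
    Set.smul_set_singleton, LinearEquiv.smul_def]

variable {ρ x} in
theorem mem_lineStabilizer_of_eq_smul {s : G} {c : K} (hx : x ≠ 0) (h : ρ s x = c • x) :
    s ∈ lineStabilizer ρ x := by
  have c_ne_zero : c ≠ 0 := by
    rintro rfl
    exact hx (by simpa using h)
  rw [mem_lineStabilizer_iff, h]
  exact Submodule.span_singleton_smul_eq (IsUnit.mk0 c c_ne_zero) x

/-- One representative of each line in the orbit of the line through `x`. -/
noncomputable def orbitFamily (q : G ⧸ lineStabilizer ρ x) : V := ρ q.out x

theorem mem_span_range_orbitFamily (s : G) :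
    ρ s x ∈ Submodule.span K (Set.range (orbitFamily ρ x)) := by
  obtain ⟨t, ht⟩ := QuotientGroup.mk_out_eq_mul (lineStabilizer ρ x) s
  obtain ⟨c, hc⟩ : ∃ c : K, c • ρ t x = x :=
    Submodule.mem_span_singleton.mp <|
      mem_lineStabilizer_iff.mp t.2 ▸ Submodule.mem_span_singleton_self x
  have eq_smul : ρ s x = c • orbitFamily ρ x s := by
    rw [orbitFamily, ht, map_mul, LinearEquiv.mul_apply, ← map_smul, hc]
  exact eq_smul ▸ Submodule.smul_mem _ c (Submodule.subset_span ⟨_, rfl⟩)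

end OrbitsOfLines

section Dimension

variable {G E : Type*} [Group G] [AddCommGroup E] [Lattice E] [IsOrderedAddMonoid E] [Module ℝ E]
  [PosSMulMono ℝ E] {ρ : G →* (E ≃ₗ[ℝ] E)} {x : E}

namespace IsRieszAtom

theorem linearIndependent_orbitFamily (hx : IsRieszAtom x) (hE : RieszArchimedean E)
    (hρ : IsPositiveRep ρ) : LinearIndependent ℝ (orbitFamily ρ x) := by
  refine linearIndependent_of_pairwise_latticeDisjoint
    (fun q ↦ (ρ q.out).map_ne_zero_iff.mpr hx.pos.ne') fun p q hpq ↦ ?_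
  have map_inv_mul : ρ p.out (ρ (p.out⁻¹ * q.out) x) = ρ q.out x := by
    rw [← LinearEquiv.mul_apply, ← map_mul, mul_inv_cancel_left]
  change LatticeDisjoint (ρ p.out x) (ρ q.out x)
  rw [← map_inv_mul, (hρ.isRieszIso p.out).latticeDisjoint_iff]
  rcases hx.latticeDisjoint_or_exists_eq_smul (hx.map (hρ.isRieszIso (p.out⁻¹ * q.out))) hE
    with disjoint | ⟨c, hc⟩
  · exact disjoint.symm
  · refine absurd ?_ hpq
    rw [← p.out_eq', ← q.out_eq']
    exact QuotientGroup.eq.mpr (mem_lineStabilizer_of_eq_smul hx.pos.ne' hc)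

theorem span_range_orbitFamily [Finite G] (hx : IsRieszAtom x) (hE : RieszArchimedean E)
    (hρ : IsPositiveRep ρ) (h : ProjectionBandIrreducible ρ) :
    Submodule.span ℝ (Set.range (orbitFamily ρ x)) = ⊤ := by
  have hull_eq_top : invariantHull ρ (ℝ ∙ x) = ⊤ :=
    h.eq_top_of_le hρ (hx.isProjectionBand_span_singleton hE)
      (mt Submodule.span_singleton_eq_bot.mp hx.pos.ne') (le_invariantHull _)
      (invariantSubmodule_invariantHull _)
  refine top_le_iff.mp (hull_eq_top.ge.trans (iSup_le fun s ↦ ?_))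
  rw [Submodule.map_span, Set.image_singleton, Submodule.span_singleton_le_iff_mem]
  exact mem_span_range_orbitFamily ρ x s

end IsRieszAtom

theorem ProjectionBandIrreducible.exists_subgroup_nonempty_basis [Finite G] [Nontrivial E]
    (h : ProjectionBandIrreducible ρ) (hρ : IsPositiveRep ρ)
    (hE : SufficientlyManyProjections E) :
    ∃ H : Subgroup G, Nonempty (Module.Basis (G ⧸ H) ℝ E) := by
  obtain ⟨x, hx⟩ := hρ.exists_isRieszAtom (h.bandIrreducible hρ hE)
  exact ⟨lineStabilizer ρ x, ⟨.mk (hx.linearIndependent_orbitFamily hE.rieszArchimedean hρ)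
    (hx.span_range_orbitFamily hE.rieszArchimedean hρ h).ge⟩⟩

end Dimension

/-- For a positive representation `ρ` of a finite group `G` in a Riesz space `E` with
sufficiently many projections the following are equivalent: order indecomposability,
projection band irreducibility, band irreducibility, ideal irreducibility and principal
band irreducibility; if they hold then `E` is finite dimensional and, when `E` is
nonzero, the dimension of `E` divides the order of `G`. -/
theorem stmt8 {G E : Type*} [Group G] [Finite G] [AddCommGroup E] [Lattice E] [Module ℝ E]
    (hadd : ∀ x y z : E, x ≤ y → x + z ≤ y + z)
    (hsmul : ∀ (c : ℝ) (x : E), 0 ≤ c → 0 ≤ x → 0 ≤ c • x)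
    (hE : SufficientlyManyProjections E)
    (ρ : G →* (E ≃ₗ[ℝ] E)) (hρ : IsPositiveRep ρ) :
    (OrderIndecomposable ρ ↔ ProjectionBandIrreducible ρ) ∧
    (ProjectionBandIrreducible ρ ↔ BandIrreducible ρ) ∧
    (BandIrreducible ρ ↔ IdealIrreducible ρ) ∧
    (IdealIrreducible ρ ↔ PrincipalBandIrreducible ρ) ∧
    (PrincipalBandIrreducible ρ →
      FiniteDimensional ℝ E ∧ (Nontrivial E → Module.finrank ℝ E ∣ Nat.card G)) := by
  have : IsOrderedAddMonoid E := { add_le_add_left := fun x y hxy z ↦ hadd x y z hxy }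
  have : PosSMulMono ℝ E := .of_smul_nonneg fun c hc x hx ↦ hsmul c x hc hx
  have band_of_projectionBand (h : ProjectionBandIrreducible ρ) : BandIrreducible ρ :=
    h.bandIrreducible hρ hE
  have ideal_of_band (h : BandIrreducible ρ) : IdealIrreducible ρ :=
    h.idealIrreducible hρ hE.rieszArchimedean
  have band_of_ideal (h : IdealIrreducible ρ) : BandIrreducible ρ := fun B hB ↦ h B hB.1
  have principal_of_band (h : BandIrreducible ρ) : PrincipalBandIrreducible ρ :=
    fun B hB ↦ h B hB.1
  have band_of_principal (h : PrincipalBandIrreducible ρ) : BandIrreducible ρ :=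
    h.bandIrreducible hρ
  refine ⟨orderIndecomposable_iff_projectionBandIrreducible hρ,
    ⟨band_of_projectionBand, BandIrreducible.projectionBandIrreducible⟩,
    ⟨ideal_of_band, band_of_ideal⟩,
    ⟨principal_of_band ∘ band_of_ideal, ideal_of_band ∘ band_of_principal⟩, fun h ↦ ?_⟩
  rcases subsingleton_or_nontrivial E with _ | _
  · exact ⟨inferInstance, fun hE0 ↦ absurd hE0 (not_nontrivial E)⟩
  · have irreducible := (band_of_principal h).projectionBandIrreducible
    obtain ⟨H, ⟨b⟩⟩ := irreducible.exists_subgroup_nonempty_basis hρ hE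
    exact ⟨.of_basis b, fun _ ↦ Module.finrank_eq_nat_card_basis b ▸ H.index_dvd_card⟩
end

section
/- Let n ≥ 1 and let T be a lattice automorphism of ℝⁿ (a linear bijection of ℝⁿ that is an order isomorphism for the coordinatewise order). Then there exist a unique m ∈ (ℝ_{>0})ⁿ and a unique permutation σ ∈ S_n such that T(e_i) = m_{σ(i)} e_{σ(i)} for every i, i.e., T = m ∘ σ is the product of the diagonal operator given by m and the permutation operator given by σ. Consequently the map (m, σ) ↦ m ∘ σ is a group isomorphism from the semidirect product (ℝ_{>0})ⁿ ⋊ S_n (with S_n acting by permuting coordinates, so (m₁, σ₁)(m₂, σ₂) = (m₁·σ₁(m₂), σ₁σ₂) where σ(m)_i = m_{σ⁻¹(i)}) onto Aut⁺(ℝⁿ). -/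
/-!
The positive multiples of the basis vectors of `ι → K` are exactly its atoms: the positive vectors
`x` all of whose minorants `0 ≤ y ≤ x` lie on the line through `x`. A linear order isomorphism `T`
preserves atoms, so `T eᵢ = c eⱼ` with `c > 0`, and comparing with the inverse shows that `i ↦ j`
is a permutation.

The values on basis vectors determine `T` even when `ι` is infinite. For `x ≥ 0` one has
`a ≤ xᵢ ↔ a eᵢ ≤ x ↔ a c eⱼ ≤ T x ↔ a c ≤ (T x)ⱼ` for every scalar `a`, so `(T x)ⱼ = c xᵢ`, and
splitting `x` into its positive and negative parts removes the sign condition.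
-/

/-- The multiplicative group of positive real numbers. -/
abbrev PosReal : Type := {x : ℝ // 0 < x}

/-- The diagonal (multiplication) operator on `ℝⁿ` associated with a strictly positive
vector `m`. -/
noncomputable def diagEquiv (n : ℕ) (m : Fin n → PosReal) :
    (Fin n → ℝ) ≃ₗ[ℝ] (Fin n → ℝ) where
  toFun x := fun i => (m i : ℝ) * x i
  invFun y := fun i => (m i : ℝ)⁻¹ * y i
  map_add' x y := funext fun i => by dsimp; ring
  map_smul' c x := funext fun i => by dsimp; ring
  left_inv x := funext fun i => by
    have h : (m i : ℝ) ≠ 0 := (m i).2.ne'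
    dsimp; field_simp
  right_inv y := funext fun i => by
    have h : (m i : ℝ) ≠ 0 := (m i).2.ne'
    dsimp; field_simp

/-- The permutation operator on `ℝⁿ` associated with `σ ∈ Sₙ`; it maps `e_i` to
`e_{σ(i)}`. -/
noncomputable def permEquiv (n : ℕ) (σ : Equiv.Perm (Fin n)) :
    (Fin n → ℝ) ≃ₗ[ℝ] (Fin n → ℝ) where
  toFun x := fun i => x (σ⁻¹ i)
  invFun y := fun i => y (σ i)
  map_add' _ _ := rfl
  map_smul' _ _ := rfl
  left_inv x := funext fun i => by simp
  right_inv y := funext fun i => by simp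

/-- `Aut⁺(ℝⁿ)`: the group of lattice automorphisms of `ℝⁿ`, i.e. linear bijections
that are order isomorphisms for the coordinatewise order. -/
noncomputable def latticeAut (n : ℕ) : Subgroup ((Fin n → ℝ) ≃ₗ[ℝ] (Fin n → ℝ)) where
  carrier := {T | ∀ x y : Fin n → ℝ, x ≤ y ↔ T x ≤ T y}
  one_mem' := fun x y => Iff.rfl
  mul_mem' := by
    intro a b ha hb x y
    exact (hb x y).trans (ha (b x) (b y))
  inv_mem' := by
    intro a ha x y
    have := ha (a.symm x) (a.symm y)
    simpa using this.symm

/-- The action of `Sₙ` on the group `(ℝ_{>0})ⁿ`, `σ(m)_i = m_{σ⁻¹(i)}`. -/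
noncomputable def permMulAut (n : ℕ) : Equiv.Perm (Fin n) →* MulAut (Fin n → PosReal) where
  toFun σ :=
    { toFun := fun m i => m (σ⁻¹ i)
      invFun := fun m i => m (σ i)
      left_inv := fun m => funext fun i => by simp
      right_inv := fun m => funext fun i => by simp
      map_mul' := fun m₁ m₂ => rfl }
  map_one' := by ext m i; simp
  map_mul' σ τ := by ext m i; simp [mul_comm]

noncomputable example (n : ℕ) : Group (SemidirectProduct (Fin n → PosReal) (Equiv.Perm (Fin n)) (permMulAut n)) := inferInstance

open Function

section Single

variable {ι K : Type*} [DecidableEq ι]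

theorem single_le_iff_of_nonneg [Zero K] [Preorder K] {x : ι → K} (hx : 0 ≤ x) (i : ι) (a : K) :
    Pi.single i a ≤ x ↔ a ≤ x i := by
  rw [Pi.single, update_le_iff]
  exact and_iff_left fun k _ ↦ hx k

theorem smul_single_one [MulZeroOneClass K] (i : ι) (a : K) :
    a • (Pi.single i 1 : ι → K) = Pi.single i a := by
  ext k
  simp [Pi.single_apply]

end Single

/-- An atom in the sense of Riesz spaces (not `IsAtom`): a positive vector `x` such that every
vector of the order interval `[0, x]` is a scalar multiple of `x`. Being an atom is preserved by
linear order isomorphisms, and the atoms of `ι → K` span the coordinate axes. -/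
def IsRieszAtom_s9 (K : Type*) {E : Type*} [Zero E] [Preorder E] [SMul K E] (x : E) : Prop :=
  0 < x ∧ ∀ y, 0 ≤ y → y ≤ x → ∃ a : K, y = a • x

namespace IsRieszAtom_s9

section Pi

variable {ι K : Type*} [DecidableEq ι] [PartialOrder K]

theorem single_one [MulZeroOneClass K] [ZeroLEOneClass K] [NeZero (1 : K)] (i : ι) :
    IsRieszAtom_s9 K (Pi.single i 1 : ι → K) := by
  refine ⟨Pi.single_pos.2 zero_lt_one, fun y hy hyi ↦ ⟨y i, ?_⟩⟩
  rw [smul_single_one]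
  refine le_antisymm (fun k ↦ ?_) ((single_le_iff_of_nonneg hy i (y i)).2 le_rfl)
  obtain rfl | hk := eq_or_ne k i
  · rw [Pi.single_eq_same]
  · simpa only [Pi.single_eq_of_ne hk] using hyi k

theorem exists_eq_smul_single [MonoidWithZero K] [IsRightCancelMulZero K] {x : ι → K}
    (hx : IsRieszAtom_s9 K x) : ∃ (c : {c : K // 0 < c}) (j : ι), x = (c : K) • Pi.single j 1 := by
  obtain ⟨hpos, hmul⟩ := hx
  obtain ⟨hnonneg, j, hj⟩ := Pi.lt_def.1 hpos
  obtain ⟨a, ha⟩ := hmul (Pi.single j (x j)) (Pi.single_nonneg.2 hj.le)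
    ((single_le_iff_of_nonneg hnonneg j (x j)).2 le_rfl)
  have ha_one : a = 1 := by
    have hax : x j = a * x j := by simpa using congrFun ha j
    exact (mul_eq_right₀ hj.ne').1 hax.symm
  refine ⟨⟨x j, hj⟩, j, ?_⟩
  rw [smul_single_one, ha, ha_one, one_smul]

end Pi

theorem map_s9 {K E F : Type*} [Semiring K] [AddCommMonoid E] [Preorder E] [Module K E]
    [AddCommMonoid F] [Preorder F] [Module K F] {T : E ≃ₗ[K] F} (hT : ∀ x y, x ≤ y ↔ T x ≤ T y)
    {x : E} (hx : IsRieszAtom_s9 K x) : IsRieszAtom_s9 K (T x) := by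
  refine ⟨?_, fun y hy hyx ↦ ?_⟩
  · rw [lt_iff_le_not_ge, ← map_zero T, ← hT, ← hT]
    exact lt_iff_le_not_ge.1 hx.1
  · obtain ⟨a, ha⟩ := hx.2 (T.symm y) (by rwa [hT, map_zero, T.apply_symm_apply])
      (by rwa [hT, T.apply_symm_apply])
    exact ⟨a, by rw [← map_smul, ← ha, T.apply_symm_apply]⟩

end IsRieszAtom_s9

theorem leftInverse_of_map_single_one {ι κ K : Type*} [DecidableEq ι] [DecidableEq κ] [Semiring K]
    [Nontrivial K] {T : (ι → K) ≃ₗ[K] (κ → K)} {f : ι → κ} {c : ι → K}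
    (hT : ∀ i, T (Pi.single i 1) = c i • Pi.single (f i) 1) {g : κ → ι} {d : κ → K}
    (hTsymm : ∀ j, T.symm (Pi.single j 1) = d j • Pi.single (g j) 1) :
    LeftInverse g f := by
  intro i
  have hi : (Pi.single i 1 : ι → K) = c i • d (f i) • Pi.single (g (f i)) 1 := by
    rw [← hTsymm, ← map_smul, ← hT, T.symm_apply_apply]
  by_contra hne
  simpa [Pi.single_eq_of_ne (Ne.symm hne)] using congrFun hi i

section LatticeIso

variable {ι κ K : Type*} [DecidableEq ι] [DecidableEq κ]

theorem exists_map_single_one [Semiring K] [IsRightCancelMulZero K] [PartialOrder K]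
    [ZeroLEOneClass K] [NeZero (1 : K)] {T : (ι → K) ≃ₗ[K] (κ → K)}
    (hT : ∀ x y, x ≤ y ↔ T x ≤ T y) (i : ι) :
    ∃ (c : {c : K // 0 < c}) (j : κ), T (Pi.single i 1) = (c : K) • Pi.single j 1 :=
  ((IsRieszAtom_s9.single_one i).map_s9 hT).exists_eq_smul_single

theorem exists_equiv_map_single_one [Semiring K] [IsRightCancelMulZero K] [PartialOrder K]
    [ZeroLEOneClass K] [Nontrivial K] {T : (ι → K) ≃ₗ[K] (κ → K)}
    (hT : ∀ x y, x ≤ y ↔ T x ≤ T y) :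
    ∃ (m : κ → {c : K // 0 < c}) (σ : ι ≃ κ),
      ∀ i, T (Pi.single i 1) = (m (σ i) : K) • Pi.single (σ i) 1 := by
  have hTsymm (x y : κ → K) : x ≤ y ↔ T.symm x ≤ T.symm y := by
    simp only [hT, T.apply_symm_apply]
  choose c f hf using exists_map_single_one hT
  choose d g hg using exists_map_single_one hTsymm
  have hgf : LeftInverse g f := leftInverse_of_map_single_one hf hg
  have hfg : LeftInverse f g := leftInverse_of_map_single_one hg hf
  exact ⟨c ∘ g, ⟨f, g, hgf, hfg⟩, fun i ↦ by simpa [hgf i] using hf i⟩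

theorem apply_eq_mul_of_map_single_one [Field K] [LinearOrder K] [IsStrictOrderedRing K]
    {T : (ι → K) →ₗ[K] (κ → K)} (hT : ∀ x y, x ≤ y ↔ T x ≤ T y) {i : ι} {j : κ} {c : K}
    (hc : 0 < c) (hTi : T (Pi.single i 1) = c • Pi.single j 1) (x : ι → K) :
    T x j = c * x i := by
  have of_nonneg {y : ι → K} (hy : 0 ≤ y) : T y j = c * y i := by
    have hTy : 0 ≤ T y := by rwa [← map_zero T, ← hT]
    rw [mul_comm, ← div_eq_iff hc.ne']
    refine eq_of_forall_le_iff fun a ↦ ?_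
    calc a ≤ T y j / c ↔ a * c ≤ T y j := le_div_iff₀ hc
      _ ↔ Pi.single j (a * c) ≤ T y := (single_le_iff_of_nonneg hTy j _).symm
      _ ↔ T (Pi.single i a) ≤ T y := by
        rw [← smul_single_one i, map_smul, hTi, smul_smul, smul_single_one]
      _ ↔ Pi.single i a ≤ y := (hT _ _).symm
      _ ↔ a ≤ y i := single_le_iff_of_nonneg hy i a
  rw [← posPart_sub_negPart x, map_sub, Pi.sub_apply, of_nonneg (posPart_nonneg x),
    of_nonneg (negPart_nonneg x), Pi.sub_apply, mul_sub]

end LatticeIso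

theorem eq_and_eq_of_smul_single_one_eq {ι κ K : Type*} [DecidableEq κ] [MulZeroOneClass K]
    {m m' : κ → K} (hm : ∀ j, m j ≠ 0) {σ σ' : ι ≃ κ}
    (h : ∀ i, m (σ i) • (Pi.single (σ i) 1 : κ → K) = m' (σ' i) • Pi.single (σ' i) 1) :
    m = m' ∧ σ = σ' := by
  simp only [smul_single_one] at h
  have hσ : σ = σ' := by
    ext i
    by_contra hne
    have hi := congrFun (h i) (σ i)
    rw [Pi.single_eq_same, Pi.single_eq_of_ne hne] at hi
    exact hm _ hi
  subst hσ
  refine ⟨funext fun j ↦ ?_, rfl⟩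
  simpa using congrFun (h (σ.symm j)) j

theorem existsUnique_map_single_one {ι κ K : Type*} [DecidableEq ι] [DecidableEq κ] [Semiring K]
    [IsRightCancelMulZero K] [PartialOrder K] [ZeroLEOneClass K] [Nontrivial K]
    {T : (ι → K) ≃ₗ[K] (κ → K)} (hT : ∀ x y, x ≤ y ↔ T x ≤ T y) :
    ∃! p : (κ → {c : K // 0 < c}) × (ι ≃ κ),
      ∀ i, T (Pi.single i 1) = (p.1 (p.2 i) : K) • Pi.single (p.2 i) 1 := by
  obtain ⟨m, σ, h⟩ := exists_equiv_map_single_one hT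
  refine ⟨(m, σ), h, fun ⟨m', σ'⟩ h' ↦ ?_⟩
  obtain ⟨hm, hσ⟩ := eq_and_eq_of_smul_single_one_eq (m := fun j ↦ (m' j : K))
    (m' := fun j ↦ (m j : K)) (fun j ↦ (m' j).2.ne') fun i ↦ (h' i).symm.trans (h i)
  exact Prod.ext (funext fun j ↦ Subtype.ext (congrFun hm j)) hσ

/-- The group of linear order automorphisms of an ordered module; on a Riesz space these are the
lattice automorphisms. -/
def orderLinearAut (K E : Type*) [Semiring K] [AddCommMonoid E] [Preorder E] [Module K E] :
    Subgroup (E ≃ₗ[K] E) where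
  carrier := {T | ∀ x y, x ≤ y ↔ T x ≤ T y}
  one_mem' _ _ := Iff.rfl
  mul_mem' {S T} hS hT x y := (hT x y).trans (hS (T x) (T y))
  inv_mem' {T} hT x y := by
    simpa using (hT (T.symm x) (T.symm y)).symm

section Monomial

variable {ι K : Type*}

/-- The representation of the permutations of `ι` on `ι → K` by coordinate permutations; `σ` sends
the basis vector at `i` to the one at `σ i`. -/
def permHom [Semiring K] [Preorder K] : Equiv.Perm ι →* orderLinearAut K (ι → K) where
  toFun σ := ⟨LinearEquiv.funCongrLeft K K σ⁻¹, fun _ _ ↦ (σ⁻¹.forall_congr_right).symm⟩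
  map_one' := rfl
  map_mul' _ _ := rfl

variable [Field K] [LinearOrder K] [IsStrictOrderedRing K]

/-- The representation of strictly positive vectors on `ι → K` by diagonal operators. -/
def diagHom : (ι → {c : K // 0 < c}) →* orderLinearAut K (ι → K) where
  toFun m := ⟨LinearEquiv.piCongrRight fun i ↦ LinearEquiv.smulOfNeZero K K (m i : K) (m i).2.ne',
    fun _ _ ↦ forall_congr' fun i ↦ (mul_le_mul_iff_right₀ (m i).2).symm⟩
  map_one' := by ext; simp
  map_mul' _ _ := by ext; simp [mul_assoc]

theorem permHom_mul_diagHom (σ : Equiv.Perm ι) (m : ι → {c : K // 0 < c}) :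
    permHom σ * diagHom m = diagHom (mulAutArrow σ m) * permHom σ := by
  ext x i
  rfl

/-- The homomorphism `(m, σ) ↦ m ∘ σ` from the semidirect product of the positive diagonal
operators and the permutations, the latter acting on the former by `σ(m)_i = m_{σ⁻¹(i)}`. -/
def monomialHom : (ι → {c : K // 0 < c}) ⋊[mulAutArrow] Equiv.Perm ι →* orderLinearAut K (ι → K) :=
  SemidirectProduct.lift diagHom permHom fun σ ↦
    MonoidHom.ext fun m ↦ eq_mul_inv_of_mul_eq (permHom_mul_diagHom σ m).symm

theorem monomialHom_apply (p : (ι → {c : K // 0 < c}) ⋊[mulAutArrow] Equiv.Perm ι) (x : ι → K)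
    (i : ι) : (monomialHom p : (ι → K) ≃ₗ[K] (ι → K)) x i = p.left i * x (p.right⁻¹ i) :=
  rfl

theorem monomialHom_single_one [DecidableEq ι]
    (p : (ι → {c : K // 0 < c}) ⋊[mulAutArrow] Equiv.Perm ι) (i : ι) :
    (monomialHom p : (ι → K) ≃ₗ[K] (ι → K)) (Pi.single i 1) =
      (p.left (p.right i) : K) • Pi.single (p.right i) 1 := by
  ext k
  obtain rfl | hk := eq_or_ne k (p.right i)
  · simp [monomialHom_apply]
  · have hki : p.right⁻¹ k ≠ i := fun h ↦ hk (Equiv.Perm.inv_eq_iff_eq.1 h)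
    rw [monomialHom_apply, Pi.single_eq_of_ne hki, Pi.smul_apply, Pi.single_eq_of_ne hk, mul_zero,
      smul_zero]

theorem monomialHom_eq_iff [DecidableEq ι]
    (p : (ι → {c : K // 0 < c}) ⋊[mulAutArrow] Equiv.Perm ι) (T : orderLinearAut K (ι → K)) :
    monomialHom p = T ↔ ∀ i, (T : (ι → K) ≃ₗ[K] (ι → K)) (Pi.single i 1) =
      (p.left (p.right i) : K) • Pi.single (p.right i) 1 := by
  refine ⟨fun h i ↦ h ▸ monomialHom_single_one p i, fun h ↦ ?_⟩
  ext x j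
  obtain ⟨i, rfl⟩ := p.right.surjective j
  rw [monomialHom_apply, Equiv.Perm.inv_def, Equiv.symm_apply_apply]
  exact (apply_eq_mul_of_map_single_one (T := (T : (ι → K) ≃ₗ[K] (ι → K)).toLinearMap) T.2
    (p.left _).2 (h i) x).symm

theorem monomialHom_bijective :
    Bijective (monomialHom : (ι → {c : K // 0 < c}) ⋊[mulAutArrow] Equiv.Perm ι →* _) := by
  classical
  refine (bijective_iff_existsUnique _).2 fun T ↦ ?_
  simp only [monomialHom_eq_iff]
  exact (SemidirectProduct.equivProd.existsUnique_congr_left).2 (existsUnique_map_single_one T.2)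

end Monomial

theorem stmt9_general {ι K : Type*} [DecidableEq ι] [Field K] [LinearOrder K]
    [IsStrictOrderedRing K] (T : (ι → K) ≃ₗ[K] (ι → K)) (hT : ∀ x y, x ≤ y ↔ T x ≤ T y) :
    (∃! p : (ι → {c : K // 0 < c}) × Equiv.Perm ι,
      ∀ i, T (Pi.single i 1) = (p.1 (p.2 i) : K) • Pi.single (p.2 i) 1) ∧
    ∃ iso : (ι → {c : K // 0 < c}) ⋊[mulAutArrow] Equiv.Perm ι ≃* orderLinearAut K (ι → K),
      ∀ m σ, iso ⟨m, σ⟩ = diagHom m * permHom σ :=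
  ⟨existsUnique_map_single_one hT, MulEquiv.ofBijective monomialHom monomialHom_bijective,
    fun _ _ ↦ rfl⟩

/-- Every lattice automorphism `T` of `ℝⁿ` is uniquely the product of a strictly
positive diagonal operator and a permutation operator (`T e_i = m_{σ(i)} e_{σ(i)}`);
consequently `(m, σ) ↦ m ∘ σ` is a group isomorphism from the semidirect product
`(ℝ_{>0})ⁿ ⋊ Sₙ` onto `Aut⁺(ℝⁿ)`. -/
theorem stmt9 (n : ℕ) (hn : 1 ≤ n) (T : (Fin n → ℝ) ≃ₗ[ℝ] (Fin n → ℝ))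
    (hT : ∀ x y : Fin n → ℝ, x ≤ y ↔ T x ≤ T y) :
    (∃! p : (Fin n → PosReal) × Equiv.Perm (Fin n),
        ∀ i : Fin n,
          T (Pi.single i (1 : ℝ)) =
            (p.1 (p.2 i) : ℝ) • (Pi.single (p.2 i) (1 : ℝ) : Fin n → ℝ)) ∧
    ∃ iso : SemidirectProduct (Fin n → PosReal) (Equiv.Perm (Fin n)) (permMulAut n)
        ≃* latticeAut n,
      ∀ (m : Fin n → PosReal) (σ : Equiv.Perm (Fin n)),
        ((iso ⟨m, σ⟩ : latticeAut n) : (Fin n → ℝ) ≃ₗ[ℝ] (Fin n → ℝ)) =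
          diagEquiv n m * permEquiv n σ := by
  obtain ⟨existsUnique, iso, h_iso⟩ := stmt9_general T hT
  exact ⟨existsUnique, iso, fun m σ ↦ congrArg Subtype.val (h_iso m σ)⟩
end

section
/- Let G be a finite subgroup of Aut⁺(ℝⁿ). Then there exist a unique subgroup H of S_n and an element m ∈ (ℝ_{>0})ⁿ such that G = { m ∘ σ ∘ m⁻¹ : σ ∈ H } = m H m⁻¹, where m⁻¹ denotes the diagonal operator of the pointwise inverse of m. Conversely, for any subgroup H of S_n and any m ∈ (ℝ_{>0})ⁿ, the set m H m⁻¹ is a finite subgroup of Aut⁺(ℝⁿ). -/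
/-! A lattice automorphism `S` of `ι → 𝕜` carries some basis vector `e_j` to a vector charging a
given coordinate `k`; anything disjoint from `e_j` is then sent to something vanishing at `k`, so
`(S x)_k` depends on `x_j` alone. Hence every lattice automorphism is a positive diagonal operator
times a permutation. If `G` is finite, summing the `G`-orbit of the constant vector `1` gives a
strictly positive vector `m` fixed by `G`, and a diagonal times a permutation `σ` that fixes `m`
must be `m ∘ σ ∘ m⁻¹`. The permutation is recovered from `m ∘ σ ∘ m⁻¹` by looking at supports,
whatever `m` is, which makes the group of permutations unique.
-/

section OrderAut

variable {R V : Type*} [Semiring R]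

/-- The group of linear automorphisms of an ordered module that preserve the order in both
directions; for a Riesz space these are the lattice automorphisms. It generalizes `latticeAut`. -/
def orderAut (R V : Type*) [Semiring R] [AddCommMonoid V] [Module R V] [LE V] :
    Subgroup (V ≃ₗ[R] V) where
  carrier := {T | ∀ x y : V, x ≤ y ↔ T x ≤ T y}
  one_mem' _ _ := Iff.rfl
  mul_mem' {_ T} hS hT x y := (hT x y).trans (hS (T x) (T y))
  inv_mem' {T} hT x y := by
    have h := hT (T.symm x) (T.symm y)
    rw [T.apply_symm_apply, T.apply_symm_apply] at h
    exact h.symm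

theorem monotone_of_mem_orderAut [AddCommMonoid V] [Module R V] [Preorder V] {S : V ≃ₗ[R] V}
    (hS : S ∈ orderAut R V) : Monotone S :=
  fun x y => (hS x y).1

theorem nonneg_apply_of_mem_orderAut [AddCommMonoid V] [Module R V] [Preorder V] {S : V ≃ₗ[R] V}
    (hS : S ∈ orderAut R V) {x : V} (hx : 0 ≤ x) : 0 ≤ S x := by
  simpa only [map_zero] using monotone_of_mem_orderAut hS hx

theorem map_inf_of_mem_orderAut [AddCommMonoid V] [Module R V] [SemilatticeInf V]
    {S : V ≃ₗ[R] V} (hS : S ∈ orderAut R V) (x y : V) : S (x ⊓ y) = S x ⊓ S y :=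
  OrderIso.map_inf ⟨S.toEquiv, (hS _ _).symm⟩ x y

theorem map_abs_of_mem_orderAut [AddCommGroup V] [Module R V] [Lattice V]
    {S : V ≃ₗ[R] V} (hS : S ∈ orderAut R V) (x : V) : S |x| = |S x| := by
  have h_sup : S (x ⊔ -x) = S x ⊔ S (-x) :=
    OrderIso.map_sup ⟨S.toEquiv, (hS _ _).symm⟩ x (-x)
  rwa [map_neg] at h_sup

theorem exists_le_forall_apply_eq_of_finite [AddCommMonoid V] [Module R V] [PartialOrder V]
    [IsOrderedAddMonoid V] {G : Subgroup (V ≃ₗ[R] V)} [Finite G] (hG : G ≤ orderAut R V)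
    {u : V} (hu : 0 ≤ u) : ∃ v, u ≤ v ∧ ∀ T ∈ G, T v = v := by
  have := Fintype.ofFinite G
  refine ⟨∑ g : G, g.1 u, ?_, fun T hT => ?_⟩
  · exact Finset.single_le_sum (f := fun g : G => g.1 u)
      (fun g _ => nonneg_apply_of_mem_orderAut (hG g.2) hu) (Finset.mem_univ 1)
  · rw [map_sum]
    exact Fintype.sum_equiv (Equiv.mulLeft (⟨T, hT⟩ : G)) _ _ fun _ => rfl

end OrderAut

section Permutation

variable {ι R : Type*} [Semiring R]

/-- The permutation representation of `Perm ι` on `ι → R`, generalizing `permEquiv`. The inverse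
makes `σ` send `e_i` to `e_{σ(i)}`. -/
def permAut (ι R : Type*) [Semiring R] : Equiv.Perm ι →* ((ι → R) ≃ₗ[R] (ι → R)) where
  toFun σ := .funCongrLeft R R σ⁻¹
  map_one' := rfl
  map_mul' _ _ := rfl

theorem permAut_apply (σ : Equiv.Perm ι) (x : ι → R) (k : ι) :
    permAut ι R σ x k = x (σ⁻¹ k) :=
  rfl

theorem permAut_mem_orderAut [LE R] (σ : Equiv.Perm ι) : permAut ι R σ ∈ orderAut R (ι → R) :=
  fun x y => (σ⁻¹.forall_congr_right (q := fun i => x i ≤ y i)).symm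

end Permutation

section Coordinates

variable {ι 𝕜 : Type*} [Field 𝕜] [LinearOrder 𝕜]

/-- The diagonal operator `x ↦ (m_i x_i)` on `ι → 𝕜` with strictly positive entries `m_i`,
generalizing `diagEquiv`. -/
def diagAut (m : ι → {c : 𝕜 // 0 < c}) : (ι → 𝕜) ≃ₗ[𝕜] (ι → 𝕜) :=
  .piCongrRight fun i => .smulOfNeZero 𝕜 𝕜 (m i : 𝕜) (m i).2.ne'

/-- The permutation representation conjugated by a positive diagonal operator,
`σ ↦ m ∘ σ ∘ m⁻¹`. Its image of a subgroup `H` is the group `m H m⁻¹`. -/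
def conjPermAut (m : ι → {c : 𝕜 // 0 < c}) : Equiv.Perm ι →* ((ι → 𝕜) ≃ₗ[𝕜] (ι → 𝕜)) :=
  (MulAut.conj (diagAut m)).toMonoidHom.comp (permAut ι 𝕜)

theorem diagAut_apply (m : ι → {c : 𝕜 // 0 < c}) (x : ι → 𝕜) (k : ι) :
    diagAut m x k = m k * x k :=
  rfl

theorem conjPermAut_apply (m : ι → {c : 𝕜 // 0 < c}) (σ : Equiv.Perm ι) (x : ι → 𝕜) (k : ι) :
    conjPermAut m σ x k = m k * ((m (σ⁻¹ k) : 𝕜)⁻¹ * x (σ⁻¹ k)) :=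
  rfl

theorem eq_of_conjPermAut_eq {m m' : ι → {c : 𝕜 // 0 < c}} {σ τ : Equiv.Perm ι}
    (h : conjPermAut m σ = conjPermAut m' τ) : σ = τ := by
  classical
  ext1 j
  by_contra hne
  have hτ : τ⁻¹ (σ j) ≠ j := fun hj => hne (Equiv.Perm.inv_eq_iff_eq.1 hj)
  have hentry := congrFun (LinearEquiv.congr_fun h (Pi.single j 1)) (σ j)
  rw [conjPermAut_apply, conjPermAut_apply, Pi.single_eq_of_ne hτ, Equiv.Perm.inv_def,
    Equiv.symm_apply_apply, Pi.single_eq_same, mul_one, mul_zero, mul_zero] at hentry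
  exact mul_ne_zero (m (σ j)).2.ne' (inv_ne_zero (m j).2.ne') hentry

theorem le_of_map_conjPermAut_le {m m' : ι → {c : 𝕜 // 0 < c}} {H H' : Subgroup (Equiv.Perm ι)}
    (h : H.map (conjPermAut m) ≤ H'.map (conjPermAut m')) : H ≤ H' := by
  intro σ hσ
  obtain ⟨τ, hτ, hτσ⟩ := h (Subgroup.mem_map_of_mem _ hσ)
  exact eq_of_conjPermAut_eq hτσ ▸ hτ

theorem eq_of_map_conjPermAut_eq {m m' : ι → {c : 𝕜 // 0 < c}} {H H' : Subgroup (Equiv.Perm ι)}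
    (h : H.map (conjPermAut m) = H'.map (conjPermAut m')) : H = H' :=
  le_antisymm (le_of_map_conjPermAut_le h.le) (le_of_map_conjPermAut_le h.ge)

variable [IsStrictOrderedRing 𝕜]

theorem diagAut_mem_orderAut (m : ι → {c : 𝕜 // 0 < c}) :
    diagAut m ∈ orderAut 𝕜 (ι → 𝕜) :=
  fun _ _ => forall_congr' fun k => (mul_le_mul_iff_right₀ (m k).2).symm

theorem conjPermAut_mem_orderAut (m : ι → {c : 𝕜 // 0 < c}) (σ : Equiv.Perm ι) :
    conjPermAut m σ ∈ orderAut 𝕜 (ι → 𝕜) :=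
  mul_mem (mul_mem (diagAut_mem_orderAut m) (permAut_mem_orderAut σ))
    (inv_mem (diagAut_mem_orderAut m))

section Representation

variable {S : (ι → 𝕜) ≃ₗ[𝕜] (ι → 𝕜)}

theorem exists_apply_single_pos [DecidableEq ι] (hS : S ∈ orderAut 𝕜 (ι → 𝕜)) (k : ι) :
    ∃ j, 0 < S (Pi.single j 1) k := by
  -- With `y = S⁻¹ e_k` and `0 < y_j`, we have `0 ≤ y_j • S e_j ≤ S y = e_k`, so `S e_j` is a
  -- nonzero multiple of `e_k`.
  obtain ⟨y, hy⟩ := S.surjective (Pi.single k 1)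
  have hy_pos : 0 < y := by
    refine lt_of_le_of_ne ((hS 0 y).2 ?_) ?_
    · rw [map_zero, hy]
      exact Pi.single_nonneg.2 zero_le_one
    · rintro rfl
      simpa using congrFun hy k
  obtain ⟨hy_nonneg, j, hj⟩ := Pi.lt_def.1 hy_pos
  have image_nonneg : 0 ≤ S (Pi.single j 1) :=
    nonneg_apply_of_mem_orderAut hS (Pi.single_nonneg.2 zero_le_one)
  have smul_image_le : y j • S (Pi.single j 1) ≤ Pi.single k 1 := by
    rw [← map_smul, ← Pi.single_smul, smul_eq_mul, mul_one, ← hy]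
    refine monotone_of_mem_orderAut hS fun i => ?_
    rcases eq_or_ne i j with rfl | hij
    · rw [Pi.single_eq_same]
    · rw [Pi.single_eq_of_ne hij]
      exact hy_nonneg i
  refine ⟨j, (image_nonneg k).lt_of_ne' fun hk => ?_⟩
  have image_eq_zero : S (Pi.single j 1) = 0 := by
    funext i
    rcases eq_or_ne i k with rfl | hik
    · exact hk
    · have hi := smul_image_le i
      rw [Pi.single_eq_of_ne hik] at hi
      exact (nonpos_of_mul_nonpos_right hi hj).antisymm (image_nonneg i)
  exact one_ne_zero (Pi.single_eq_zero_iff.1 ((map_eq_zero_iff S S.injective).1 image_eq_zero))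

theorem apply_eq_zero_of_apply_single_pos [DecidableEq ι] (hS : S ∈ orderAut 𝕜 (ι → 𝕜))
    {j k : ι} (hjk : 0 < S (Pi.single j 1) k) {x : ι → 𝕜} (hx : x j = 0) : S x k = 0 := by
  have disjoint : |x| ⊓ Pi.single j 1 = 0 := by
    funext i
    rcases eq_or_ne i j with rfl | hij
    · simp [hx]
    · simp [hij]
  have disjoint_image : |S x k| ⊓ S (Pi.single j 1) k = 0 := by
    have := congrArg S disjoint
    rw [map_inf_of_mem_orderAut hS, map_abs_of_mem_orderAut hS, map_zero] at this
    exact congrFun this k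
  rcases min_eq_iff.1 disjoint_image with ⟨h, -⟩ | ⟨h, -⟩
  · exact abs_eq_zero.1 h
  · exact absurd h hjk.ne'

theorem apply_one_pos_and_exists_forall_apply_eq (hS : S ∈ orderAut 𝕜 (ι → 𝕜)) (k : ι) :
    0 < S 1 k ∧ ∃ j, ∀ x, S x k = S 1 k * x j := by
  classical
  obtain ⟨j, hj⟩ := exists_apply_single_pos hS k
  have apply_eq (x : ι → 𝕜) : S x k = S 1 k * x j := by
    have h := apply_eq_zero_of_apply_single_pos hS hj (x := x - x j • 1) (by simp)
    rw [map_sub, map_smul, Pi.sub_apply, Pi.smul_apply, smul_eq_mul, sub_eq_zero] at h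
    rw [h, mul_comm]
  refine ⟨?_, j, apply_eq⟩
  rwa [apply_eq, Pi.single_eq_same, mul_one] at hj

theorem exists_eq_diagAut_mul_permAut (hS : S ∈ orderAut 𝕜 (ι → 𝕜)) :
    ∃ d σ, S = diagAut d * permAut ι 𝕜 σ := by
  choose pos t ht using apply_one_pos_and_exists_forall_apply_eq hS
  let d : ι → {c : 𝕜 // 0 < c} := fun k => ⟨S 1 k, pos k⟩
  have comp_eq : (fun x : ι → 𝕜 => x ∘ t) = ((diagAut d)⁻¹ * S : (ι → 𝕜) ≃ₗ[𝕜] (ι → 𝕜)) := by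
    funext x
    refine ((diagAut d).symm_apply_eq.2 ?_).symm
    exact funext fun k => ht k x
  have comp_bijective : Function.Bijective fun x : ι → 𝕜 => x ∘ t :=
    comp_eq ▸ LinearEquiv.bijective _
  have t_bijective : Function.Bijective t :=
    ⟨Function.surjective_comp_right_iff_injective.1 comp_bijective.surjective,
      Function.injective_comp_right_iff_surjective.1 comp_bijective.injective⟩
  refine ⟨d, (Equiv.ofBijective t t_bijective)⁻¹, LinearEquiv.ext fun x => funext fun k => ?_⟩
  exact ht k x

theorem exists_eq_conjPermAut_of_apply_eq (hS : S ∈ orderAut 𝕜 (ι → 𝕜))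
    {m : ι → {c : 𝕜 // 0 < c}} (hm : S (fun i => m i) = fun i => (m i : 𝕜)) :
    ∃ σ, S = conjPermAut m σ := by
  obtain ⟨d, σ, rfl⟩ := exists_eq_diagAut_mul_permAut hS
  refine ⟨σ, LinearEquiv.ext fun x => funext fun k => ?_⟩
  have hk : d k * (m (σ⁻¹ k) : 𝕜) = m k := congrFun hm k
  rw [LinearEquiv.mul_apply, diagAut_apply, permAut_apply, conjPermAut_apply, ← hk, mul_assoc,
    mul_inv_cancel_left₀ (m (σ⁻¹ k)).2.ne']

end Representation

theorem exists_eq_map_conjPermAut {G : Subgroup ((ι → 𝕜) ≃ₗ[𝕜] (ι → 𝕜))} [Finite G]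
    (hG : G ≤ orderAut 𝕜 (ι → 𝕜)) :
    ∃ (m : ι → {c : 𝕜 // 0 < c}) (H : Subgroup (Equiv.Perm ι)), G = H.map (conjPermAut m) := by
  obtain ⟨v, one_le, hv⟩ := exists_le_forall_apply_eq_of_finite hG (zero_le_one' (ι → 𝕜))
  let m : ι → {c : 𝕜 // 0 < c} := fun i => ⟨v i, one_pos.trans_le (one_le i)⟩
  refine ⟨m, G.comap (conjPermAut m), (Subgroup.map_comap_eq_self fun T hT => ?_).symm⟩
  obtain ⟨σ, rfl⟩ := exists_eq_conjPermAut_of_apply_eq (hG hT) (m := m) (hv T hT)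
  exact ⟨σ, rfl⟩

end Coordinates

theorem mem_map_conjPermAut_iff_diagEquiv {n : ℕ} {m : Fin n → PosReal}
    {H : Subgroup (Equiv.Perm (Fin n))} {T : (Fin n → ℝ) ≃ₗ[ℝ] (Fin n → ℝ)} :
    T ∈ H.map (conjPermAut m) ↔
      ∃ σ ∈ H, T = diagEquiv n m * permEquiv n σ * (diagEquiv n m)⁻¹ := by
  simp only [Subgroup.mem_map, eq_comm (a := T)]
  rfl

theorem stmt10_general (ι 𝕜 : Type*) [Field 𝕜] [LinearOrder 𝕜] [IsStrictOrderedRing 𝕜] :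
    (∀ G : Subgroup ((ι → 𝕜) ≃ₗ[𝕜] (ι → 𝕜)), Finite G → G ≤ orderAut 𝕜 (ι → 𝕜) →
      ∃! H : Subgroup (Equiv.Perm ι), ∃ m : ι → {c : 𝕜 // 0 < c}, G = H.map (conjPermAut m)) ∧
    (∀ (H : Subgroup (Equiv.Perm ι)) (m : ι → {c : 𝕜 // 0 < c}), Finite H →
      Finite (H.map (conjPermAut m)) ∧ H.map (conjPermAut m) ≤ orderAut 𝕜 (ι → 𝕜)) := by
  refine ⟨fun G _ hG => ?_, fun H m _ => ⟨?_, ?_⟩⟩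
  · obtain ⟨m, H, hH⟩ := exists_eq_map_conjPermAut hG
    exact ⟨H, ⟨m, hH⟩, fun H' ⟨m', hH'⟩ => eq_of_map_conjPermAut_eq (hH'.symm.trans hH)⟩
  · exact (Set.toFinite (H : Set (Equiv.Perm ι))).image (conjPermAut m)
  · rintro _ ⟨σ, -, rfl⟩
    exact conjPermAut_mem_orderAut m σ

/-- Every finite subgroup `G` of `Aut⁺(ℝⁿ)` is of the form `m H m⁻¹` for a unique
subgroup `H ⊆ Sₙ` and some strictly positive diagonal operator `m`; conversely every
set of this form is a finite subgroup of `Aut⁺(ℝⁿ)`. -/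
theorem stmt10 (n : ℕ) :
    (∀ G : Subgroup ((Fin n → ℝ) ≃ₗ[ℝ] (Fin n → ℝ)), Finite G → G ≤ latticeAut n →
      ∃! H : Subgroup (Equiv.Perm (Fin n)), ∃ m : Fin n → PosReal,
        ∀ T : (Fin n → ℝ) ≃ₗ[ℝ] (Fin n → ℝ),
          T ∈ G ↔ ∃ σ ∈ H, T = diagEquiv n m * permEquiv n σ * (diagEquiv n m)⁻¹) ∧
    (∀ (H : Subgroup (Equiv.Perm (Fin n))) (m : Fin n → PosReal),
      ∃ K : Subgroup ((Fin n → ℝ) ≃ₗ[ℝ] (Fin n → ℝ)), Finite K ∧ K ≤ latticeAut n ∧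
        ∀ T : (Fin n → ℝ) ≃ₗ[ℝ] (Fin n → ℝ),
          T ∈ K ↔ ∃ σ ∈ H, T = diagEquiv n m * permEquiv n σ * (diagEquiv n m)⁻¹) := by
  simp only [← mem_map_conjPermAut_iff_diagEquiv, ← SetLike.ext_iff]
  exact (stmt10_general (Fin n) ℝ).imp_right fun conj_perm H m =>
    have ⟨finite, le⟩ := conj_perm H m inferInstance
    ⟨_, finite, le, rfl⟩
end

section
/- Let H be a finite group acting by additive automorphisms on an abelian group (A, +) such that for every a ∈ A there exists a unique element, denoted a/|H|, with |H|·(a/|H|) = a. Let f : H → A be a map. Then f satisfies the crossed homomorphism identity f(st) = s·(f(t)) + f(s) for all s, t ∈ H if and only if there exists a ∈ A such that f(s) = a − s·a for all s ∈ H. -/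
/-!
For a crossed homomorphism `f` of a finite group `H`, summing `f (s * t) = s • f t + f s` over `t`
expresses `|H| • f s` as `b - s • b`, where `b` is the sum of the values of `f`. Division by `|H|`
commutes with the action, so when it is uniquely possible, `b / |H|` exhibits `f` itself as
principal.
-/

open groupCohomology

section

variable {G A : Type*} [AddCommGroup A]

theorem isCoboundary₁_iff_exists_eq_sub_smul [DistribSMul G A] {f : G → A} :
    IsCoboundary₁ f ↔ ∃ a : A, ∀ s : G, f s = a - s • a := by
  constructor
  · rintro ⟨x, hx⟩
    exact ⟨-x, fun s => by rw [← hx, smul_neg]; abel⟩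
  · rintro ⟨a, ha⟩
    exact ⟨-a, fun s => by rw [ha, smul_neg]; abel⟩

theorem isCocycle₁_of_isCoboundary₁ [Monoid G] [DistribMulAction G A] {f : G → A}
    (hf : IsCoboundary₁ f) : IsCocycle₁ f := by
  obtain ⟨x, hx⟩ := hf
  intro s t
  rw [← hx, ← hx, ← hx, smul_sub, mul_smul]
  abel

theorem isCoboundary₁_of_smul {R : Type*} [SMul G A] [DistribSMul R A] [SMulCommClass R G A]
    {r : R} (hr : Function.Bijective fun a : A => r • a) {f : G → A}
    (hf : IsCoboundary₁ (r • f)) : IsCoboundary₁ f := by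
  obtain ⟨x, hx⟩ := hf
  obtain ⟨y, rfl⟩ := hr.surjective x
  refine ⟨y, fun s => hr.injective ?_⟩
  calc r • (s • y - y) = s • r • y - r • y := by rw [smul_sub, smul_comm r s y]
    _ = r • f s := hx s

theorem isCoboundary₁_card_nsmul_of_isCocycle₁ [Group G] [Finite G] [DistribSMul G A]
    {f : G → A} (hf : IsCocycle₁ f) : IsCoboundary₁ (Nat.card G • f) := by
  have := Fintype.ofFinite G
  refine isCoboundary₁_iff_exists_eq_sub_smul.2 ⟨∑ t, f t, fun s => eq_sub_of_add_eq' ?_⟩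
  calc s • ∑ t, f t + Nat.card G • f s = ∑ t, (s • f t + f s) := by
        rw [Finset.sum_add_distrib, Finset.smul_sum, Finset.sum_const, Finset.card_univ,
          Nat.card_eq_fintype_card]
    _ = ∑ t, f (s * t) := Finset.sum_congr rfl fun t _ => (hf s t).symm
    _ = ∑ t, f t := Equiv.sum_comp (Equiv.mulLeft s) f

theorem isCocycle₁_iff_isCoboundary₁_of_bijective_card_nsmul [Group G] [Finite G]
    [DistribMulAction G A]
    (hG : Function.Bijective fun a : A => Nat.card G • a) {f : G → A} :
    IsCocycle₁ f ↔ IsCoboundary₁ f :=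
  ⟨fun hf => isCoboundary₁_of_smul hG (isCoboundary₁_card_nsmul_of_isCocycle₁ hf),
    isCocycle₁_of_isCoboundary₁⟩

end

/-- If a finite group `H` acts by additive automorphisms on an abelian group `A` in
which division by `|H|` is uniquely possible, then a map `f : H → A` is a crossed
homomorphism (`f(st) = s·f(t) + f(s)`) if and only if it is a principal crossed
homomorphism (`f(s) = a − s·a` for some `a ∈ A`). -/
theorem stmt11 {H A : Type*} [Group H] [Finite H] [AddCommGroup A]
    [DistribMulAction H A]
    (hdiv : ∀ a : A, ∃! b : A, Nat.card H • b = a)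
    (f : H → A) :
    (∀ s t : H, f (s * t) = s • f t + f s) ↔ (∃ a : A, ∀ s : H, f s = a - s • a) := by
  have hbij : Function.Bijective fun b : A => Nat.card H • b :=
    (Function.bijective_iff_existsUnique _).2 hdiv
  calc (∀ s t : H, f (s * t) = s • f t + f s) ↔ IsCoboundary₁ f :=
        isCocycle₁_iff_isCoboundary₁_of_bijective_card_nsmul hbij
    _ ↔ ∃ a : A, ∀ s : H, f s = a - s • a := isCoboundary₁_iff_exists_eq_sub_smul
end

section
/- Let G be a finite group and ρ : G → Aut⁺(ℝⁿ) a positive representation. Then ρ is order equivalent to a permutation representation of G, i.e., there exist a group homomorphism π : G → S_n and a lattice isomorphism T of ℝⁿ with T ∘ ρ_s = π_s ∘ T for all s ∈ G. -/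
/-!
The coordinates where `T x` vanishes can be read off from the order alone: `x i = 0` says that `|x|`
and `eᵢ` are disjoint, and a lattice isomorphism `T` preserves disjointness. Hence each `j` has an
`i` such that `x i = 0` forces `T x j = 0`. If moreover `T 1 = 1`, applying this to `x - x i • 1`
gives `T x j = x i`, so `T` permutes the coordinates. A group of lattice automorphisms with an
order-bounded orbit of `1` fixes the supremum of that orbit, and dividing by this strictly positive
vector conjugates the whole group to one fixing `1`.
-/

section IsLatticeIso

variable {R E F : Type*} [Semiring R] [AddCommGroup E] [Module R E] [AddCommGroup F] [Module R F]

/-- Lattice isomorphisms of Riesz spaces: linear bijections preserving the order in both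
directions. The predicate only mentions `≤`; suprema and infima are then preserved automatically. -/
def IsLatticeIso [LE E] [LE F] (T : E ≃ₗ[R] F) : Prop :=
  ∀ x y, x ≤ y ↔ T x ≤ T y

namespace IsLatticeIso

section LE

variable [LE E] [LE F] {T : E ≃ₗ[R] F}

/-- The order isomorphism underlying a lattice isomorphism, giving access to the preservation of
suprema and infima. -/
def toOrderIso (hT : IsLatticeIso T) : E ≃o F where
  toEquiv := T.toEquiv
  map_rel_iff' := (hT _ _).symm

theorem symm (hT : IsLatticeIso T) : IsLatticeIso T.symm := fun x y => by
  simpa only [LinearEquiv.apply_symm_apply] using (hT (T.symm x) (T.symm y)).symm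

theorem trans {H : Type*} [AddCommGroup H] [Module R H] [LE H] {S : F ≃ₗ[R] H}
    (hT : IsLatticeIso T) (hS : IsLatticeIso S) : IsLatticeIso (T.trans S) :=
  fun x y => (hT x y).trans (hS (T x) (T y))

theorem map_nonneg (hT : IsLatticeIso T) {x : E} (hx : 0 ≤ x) : 0 ≤ T x := by
  simpa only [map_zero] using (hT 0 x).1 hx

end LE

section Lattice

variable [Lattice E] [Lattice F] {T : E ≃ₗ[R] F}

theorem map_abs (hT : IsLatticeIso T) (x : E) : T |x| = |T x| :=
  (hT.toOrderIso.map_sup x (-x)).trans (congrArg (T x ⊔ ·) (map_neg T x))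

theorem map_inf_eq_zero (hT : IsLatticeIso T) {x y : E} (hxy : x ⊓ y = 0) : T x ⊓ T y = 0 :=
  (hT.toOrderIso.map_inf x y).symm.trans ((congrArg T hxy).trans (map_zero T))

end Lattice

end IsLatticeIso

end IsLatticeIso

theorem inf_single_eq_zero_iff {ι K : Type*} [DecidableEq ι] [Zero K] [LinearOrder K]
    {x : ι → K} (hx : 0 ≤ x) {i : ι} {a : K} (ha : 0 < a) :
    x ⊓ Pi.single i a = 0 ↔ x i = 0 := by
  refine ⟨fun h => ?_, fun h => funext fun k => ?_⟩
  · have hmin : min (x i) a = 0 := by simpa using congrFun h i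
    exact (min_eq_iff.1 hmin).elim And.left fun h' => absurd h'.1 ha.ne'
  · obtain rfl | hk := eq_or_ne k i
    · simp [h, ha.le]
    · simpa [hk] using hx k

section Coordinates

variable {ι κ K : Type*} [Ring K] [LinearOrder K] [IsStrictOrderedRing K]

namespace IsLatticeIso

variable {T : (ι → K) ≃ₗ[K] (κ → K)}

theorem exists_single_apply_ne_zero [DecidableEq ι] (hT : IsLatticeIso T) (j : κ) :
    ∃ i, T (Pi.single i 1) j ≠ 0 := by
  classical
  by_contra! h
  let v : ι → K := T.symm (Pi.single j 1)
  have hv : 0 ≤ v := hT.symm.map_nonneg (Pi.single_nonneg.2 zero_le_one)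
  have hv_zero : v = 0 := funext fun i => by
    have hi : T (Pi.single i 1) ⊓ Pi.single j 1 = 0 :=
      (inf_single_eq_zero_iff (hT.map_nonneg (Pi.single_nonneg.2 zero_le_one)) one_pos).2 (h i)
    have hdisj : Pi.single i 1 ⊓ v = 0 := by
      simpa only [LinearEquiv.symm_apply_apply] using hT.symm.map_inf_eq_zero hi
    exact (inf_single_eq_zero_iff hv one_pos).1 (inf_comm v _ ▸ hdisj)
  exact one_ne_zero (Pi.single_eq_zero_iff.1 ((map_eq_zero_iff T.symm T.symm.injective).1 hv_zero))

theorem exists_forall_apply_eq_zero (hT : IsLatticeIso T) (j : κ) :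
    ∃ i, ∀ x, x i = 0 → T x j = 0 := by
  classical
  obtain ⟨i, hi⟩ := hT.exists_single_apply_ne_zero j
  refine ⟨i, fun x hx => ?_⟩
  have hdisj : |x| ⊓ Pi.single i 1 = 0 :=
    (inf_single_eq_zero_iff (abs_nonneg x) one_pos).2 (by simp [hx])
  have hmin : min |T x j| (T (Pi.single i 1) j) = 0 := by
    simpa [hT.map_abs] using congrFun (hT.map_inf_eq_zero hdisj) j
  exact abs_eq_zero.1 ((min_eq_iff.1 hmin).elim And.left fun h => absurd h.1 hi)

theorem exists_forall_apply_eq_comp (hT : IsLatticeIso T) (h_one : T 1 = 1) :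
    ∃ f : κ → ι, ∀ x, T x = x ∘ f := by
  choose f hf using hT.exists_forall_apply_eq_zero
  refine ⟨f, fun x => funext fun j => sub_eq_zero.1 ?_⟩
  simpa [h_one] using hf j (x - x (f j) • 1) (by simp)

end IsLatticeIso

end Coordinates

theorem eq_of_forall_comp_eq {ι κ K : Type*} [Nontrivial K] {f g : κ → ι}
    (h : ∀ x : ι → K, x ∘ f = x ∘ g) : f = g := by
  classical
  obtain ⟨a, b, hab⟩ := exists_pair_ne K
  funext k
  by_contra hk
  exact hab (by simpa [Ne.symm hk] using congrFun (h (Function.update (fun _ => b) (f k) a)) k)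

/-- The linear action of the permutations of `ι` on `ι → K` by permutation operators. The inverse
makes `σ` send the basis vector `eᵢ` to `e_{σ i}`. -/
def permLinearAut (ι K : Type*) [Semiring K] :
    Equiv.Perm ι →* ((ι → K) ≃ₗ[K] (ι → K)) where
  toFun σ := LinearEquiv.funCongrLeft K K σ⁻¹
  map_one' := rfl
  map_mul' _ _ := rfl

theorem permLinearAut_injective (ι K : Type*) [Semiring K] [Nontrivial K] :
    Function.Injective (permLinearAut ι K) := fun _ _ h =>
  inv_injective (DFunLike.coe_injective (eq_of_forall_comp_eq (LinearEquiv.congr_fun h)))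

theorem IsLatticeIso.mem_range_permLinearAut {ι K : Type*} [Ring K] [LinearOrder K]
    [IsStrictOrderedRing K] {T : (ι → K) ≃ₗ[K] (ι → K)} (hT : IsLatticeIso T)
    (h_one : T 1 = 1) : T ∈ (permLinearAut ι K).range := by
  obtain ⟨f, hf⟩ := hT.exists_forall_apply_eq_comp h_one
  obtain ⟨g, hg⟩ := hT.symm.exists_forall_apply_eq_comp (T.symm_apply_eq.2 h_one.symm)
  have hfg : f ∘ g = id := eq_of_forall_comp_eq (K := K) fun x => by
    rw [← Function.comp_assoc, ← hf, ← hg, T.symm_apply_apply, Function.comp_id]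
  have hgf : g ∘ f = id := eq_of_forall_comp_eq (K := K) fun x => by
    rw [← Function.comp_assoc, ← hg, ← hf, T.apply_symm_apply, Function.comp_id]
  exact ⟨⟨g, f, congrFun hfg, congrFun hgf⟩, LinearEquiv.ext fun x => (hf x).symm⟩

section Representation

variable {G ι K : Type*}

theorem exists_eq_permLinearAut_comp [MulOneClass G] [Ring K] [LinearOrder K]
    [IsStrictOrderedRing K] (ρ : G →* ((ι → K) ≃ₗ[K] (ι → K))) (hρ : ∀ s, IsLatticeIso (ρ s))
    (h_one : ∀ s, ρ s 1 = 1) :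
    ∃ π : G →* Equiv.Perm ι, ρ = (permLinearAut ι K).comp π := by
  let e := MonoidHom.ofInjective (permLinearAut_injective ι K)
  let ρ' := ρ.codRestrict (permLinearAut ι K).range
    fun s => (hρ s).mem_range_permLinearAut (h_one s)
  refine ⟨e.symm.toMonoidHom.comp ρ', MonoidHom.ext fun s => ?_⟩
  exact (congrArg Subtype.val (e.apply_symm_apply (ρ' s))).symm

theorem exists_isLatticeIso_apply_eq_one [Field K] [LinearOrder K] [IsStrictOrderedRing K]
    {u : ι → K} (hu : ∀ i, 0 < u i) :
    ∃ T : (ι → K) ≃ₗ[K] (ι → K), IsLatticeIso T ∧ T u = 1 := by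
  refine ⟨.piCongrRight fun i => .smulOfNeZero K K (u i)⁻¹ (inv_ne_zero (hu i).ne'), ?_, ?_⟩
  · exact fun x y => forall_congr' fun i => (mul_le_mul_iff_right₀ (inv_pos.2 (hu i))).symm
  · exact funext fun i => inv_mul_cancel₀ (hu i).ne'

theorem exists_conj_permLinearAut_of_fixed [MulOneClass G] [Field K] [LinearOrder K]
    [IsStrictOrderedRing K] (ρ : G →* ((ι → K) ≃ₗ[K] (ι → K))) (hρ : ∀ s, IsLatticeIso (ρ s))
    {u : ι → K} (hu : ∀ i, 0 < u i) (hfix : ∀ s, ρ s u = u) :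
    ∃ (π : G →* Equiv.Perm ι) (T : (ι → K) ≃ₗ[K] (ι → K)),
      IsLatticeIso T ∧ ∀ s x, T (ρ s x) = permLinearAut ι K (π s) (T x) := by
  obtain ⟨T, hT, hTu⟩ := exists_isLatticeIso_apply_eq_one hu
  let θ : G →* ((ι → K) ≃ₗ[K] (ι → K)) := (MulAut.conj T).toMonoidHom.comp ρ
  have hθ (s : G) : IsLatticeIso (θ s) := hT.symm.trans ((hρ s).trans hT)
  have hθ_one (s : G) : θ s 1 = 1 := by
    change T (ρ s (T.symm 1)) = 1
    rw [T.symm_apply_eq.2 hTu.symm, hfix, hTu]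
  obtain ⟨π, hπ⟩ := exists_eq_permLinearAut_comp θ hθ hθ_one
  refine ⟨π, T, hT, fun s x => ?_⟩
  calc T (ρ s x) = θ s (T x) := congrArg (T ∘ ρ s) (T.symm_apply_apply x).symm
    _ = permLinearAut ι K (π s) (T x) := by rw [hπ, MonoidHom.comp_apply]

theorem apply_eq_of_isLUB_orbit {E : Type*} [Group G] [Semiring K] [AddCommGroup E]
    [Module K E] [PartialOrder E] (ρ : G →* (E ≃ₗ[K] E)) (hρ : ∀ s, IsLatticeIso (ρ s))
    {x u : E} (hu : IsLUB (Set.range fun s => ρ s x) u) (t : G) : ρ t u = u := by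
  have horbit : ρ t '' (Set.range fun s => ρ s x) = Set.range fun s => ρ s x := by
    rw [← Set.range_comp, ← (Equiv.mulLeft t).surjective.range_comp fun s => ρ s x]
    exact congrArg Set.range (funext fun s => by simp)
  have himage : IsLUB (ρ t '' Set.range fun s => ρ s x) (ρ t u) :=
    (hρ t).toOrderIso.isLUB_image'.2 hu
  exact (horbit ▸ himage).unique hu

theorem stmt14_general [Group G] (ρ : G →* ((ι → ℝ) ≃ₗ[ℝ] (ι → ℝ)))
    (hρ : ∀ s, IsLatticeIso (ρ s)) (hbdd : BddAbove (Set.range fun s => ρ s 1)) :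
    ∃ (π : G →* Equiv.Perm ι) (T : (ι → ℝ) ≃ₗ[ℝ] (ι → ℝ)),
      IsLatticeIso T ∧ ∀ s x, T (ρ s x) = permLinearAut ι ℝ (π s) (T x) := by
  have hlub := isLUB_ciSup hbdd
  have h_one_le : 1 ≤ ⨆ s, ρ s 1 := hlub.1 ⟨1, by simp⟩
  exact exists_conj_permLinearAut_of_fixed ρ hρ (fun i => one_pos.trans_le (h_one_le i))
    (apply_eq_of_isLUB_orbit ρ hρ hlub)

end Representation

/-- Every positive representation of a finite group in `ℝⁿ` is order equivalent to a
permutation representation. -/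
theorem stmt14 {G : Type*} [Group G] [Finite G] (n : ℕ)
    (ρ : G →* ((Fin n → ℝ) ≃ₗ[ℝ] (Fin n → ℝ)))
    (hρ : ∀ (s : G) (x y : Fin n → ℝ), x ≤ y ↔ ρ s x ≤ ρ s y) :
    ∃ (π : G →* Equiv.Perm (Fin n)) (T : (Fin n → ℝ) ≃ₗ[ℝ] (Fin n → ℝ)),
      (∀ x y : Fin n → ℝ, x ≤ y ↔ T x ≤ T y) ∧
      ∀ (s : G) (x : Fin n → ℝ), T (ρ s x) = permEquiv n (π s) (T x) := by
  exact stmt14_general ρ hρ (Set.finite_range _).bddAbove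
end
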